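/- arXiv:0907.2051 — 2 statements merged into one kernel-verified Lean document; each statement's English description precedes it below -/
import Mathlib

section
/- There is an absolute constant c > 0 such that for every finite A ⊆ F_p with 2 ≤ |A| ≤ p^{1/2}, one has max{|A+A|, |AA|} ≥ c|A|^{13/12}. -/
open Finset Pointwise
open scoped Combinatorics.Additive

/-!
A small product set gives a large multiplicative energy, hence an `e ∈ X` for which the
intersections `a • X ∩ e • X`, `a ∈ X`, are large on average. Let `B` be the set of `a` for which
this intersection has at least `N` elements. Most of each dilate `± a • B`, `a ∈ B`, is covered by
`O(|X + X| / N)` translates of `e • X`, so for every `r` in `(B - B) / (B - B)` a positive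
proportion `Y` of `B` satisfies `|Y + r • Y| ≪ (|X + X| / N) ^ 4 |X + X + X + X|`.

As `|B| ≤ √p`, either the quotients fill the field, and averaging gives some quotient `ξ = r` with
`E[B, ξ • B] ≪ |B| ^ 2`, or some quotient `r` has `ξ = r + 1` outside the quotient set, so that the
sums `x + ξ * y` are all distinct. In both cases `|Y + ξ • Y| ≫ |B| ^ 2`, also for large subsets of
`Y`, and Plünnecke's inequality in Petridis' form passes from `ξ` to `r`. Comparing the two bounds
gives `|B| ^ 3 N ^ 4 ≪ |X + X| ^ 5 |X + X + X + X|` for every `N`: a weak-type bound, which can be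
summed over `N` without a logarithm because the exponent of `N` exceeds that of `|B|`.
-/

section Petridis

variable {G : Type*} [DecidableEq G]

theorem map_add_le_map_empty_of_submodular [AddGroup G] {R : Type*} [AddCommMonoid R]
    [PartialOrder R] [IsOrderedCancelAddMonoid R] {ψ : Finset G → R} {Z : Finset G}
    (hsub : ∀ U V, ψ (U ∪ V) + ψ (U ∩ V) ≤ ψ U + ψ V) (htrans : ∀ (x : G) U, ψ (x +ᵥ U) = ψ U)
    (hmin : ∀ Z' ⊆ Z, ψ Z ≤ ψ Z') (C : Finset G) : ψ (C + Z) ≤ ψ ∅ := by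
  induction C using Finset.induction_on with
  | empty => rw [empty_add]
  | insert x C _ ih =>
    have hinter : x +ᵥ ((-x +ᵥ (C + Z)) ∩ Z) = (C + Z) ∩ (x +ᵥ Z) := by
      rw [vadd_finset_inter, vadd_neg_vadd]
    have hZ : ψ Z ≤ ψ ((C + Z) ∩ (x +ᵥ Z)) := by
      rw [← hinter, htrans]
      exact hmin _ inter_subset_right
    have hunion : insert x C + Z = (C + Z) ∪ (x +ᵥ Z) := by
      rw [insert_eq, union_add, ← singleton_vadd, vadd_eq_add, union_comm]
    refine le_of_add_le_add_right (a := ψ ((C + Z) ∩ (x +ᵥ Z))) ?_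
    calc ψ (insert x C + Z) + ψ ((C + Z) ∩ (x +ᵥ Z)) ≤ ψ (C + Z) + ψ (x +ᵥ Z) := by
          rw [hunion]
          exact hsub _ _
      _ ≤ ψ ∅ + ψ ((C + Z) ∩ (x +ᵥ Z)) := by
          rw [htrans]
          exact add_le_add ih hZ

theorem card_union_add_add_card_inter_add_le [Add G] (U V B : Finset G) :
    #((U ∪ V) + B) + #((U ∩ V) + B) ≤ #(U + B) + #(V + B) := by
  rw [union_add, ← card_union_add_card_inter (U + B) (V + B)]
  gcongr
  exact inter_add_subset

/-- Petridis minimises the ratio `|Z + B| / |Z|`, which gives no lower bound on `|Z|`. Minimising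
`|Z + B| - κ |Z|` instead, with `κ` twice the ratio of `A`, forces `|Z| ≥ |A| / 2`. -/
theorem exists_large_subset_forall_card_add_add_le [AddGroup G] (A : Finset G) {B : Finset G}
    (hB : B.Nonempty) :
    ∃ Z ⊆ A, #A ≤ 2 * #Z ∧
      ∀ C : Finset G, (#(C + Z + B) : ℝ) ≤ 2 * (#(A + B) / #A) * #(C + Z) := by
  obtain rfl | hA := A.eq_empty_or_nonempty
  · exact ⟨∅, by simp⟩
  have hABpos : (0 : ℝ) < #(A + B) := mod_cast (hA.add hB).card_pos
  set κ : ℝ := 2 * (#(A + B) / #A) with hκ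
  have hκpos : 0 < κ := by positivity
  let ψ : Finset G → ℝ := fun U ↦ #(U + B) - κ * #U
  obtain ⟨Z, hZA, hmin⟩ := exists_min_image A.powerset ψ ⟨A, mem_powerset_self A⟩
  rw [mem_powerset] at hZA
  refine ⟨Z, hZA, ?_, fun C ↦ ?_⟩
  · have hApos : (0 : ℝ) < #A := mod_cast hA.card_pos
    have hψA : ψ A = -#(A + B) := by simp only [ψ, hκ]; field_simp; ring
    have hψZ : -(κ * #Z) ≤ ψ Z := by simp [ψ]
    have hZ : (#(A + B) : ℝ) ≤ κ * #Z := by linarith [hmin A (mem_powerset_self A)]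
    have : (#A : ℝ) ≤ 2 * #Z := by
      refine le_of_mul_le_mul_left ?_ hABpos
      calc (#(A + B) : ℝ) * #A ≤ κ * #Z * #A := by gcongr
        _ = #(A + B) * (2 * #Z) := by rw [hκ]; field_simp
    exact_mod_cast this
  · have hsub (U V : Finset G) : ψ (U ∪ V) + ψ (U ∩ V) ≤ ψ U + ψ V := by
      have h₁ : (#((U ∪ V) + B) + #((U ∩ V) + B) : ℝ) ≤ #(U + B) + #(V + B) :=
        mod_cast card_union_add_add_card_inter_add_le U V B
      have h₂ : (#(U ∪ V) + #(U ∩ V) : ℝ) = #U + #V := mod_cast card_union_add_card_inter U V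
      simp only [ψ]
      linear_combination h₁ - κ * h₂
    have hψ := map_add_le_map_empty_of_submodular hsub
      (fun x U ↦ by simp only [ψ, vadd_add_assoc, card_vadd_finset])
      (fun Z' hZ' ↦ hmin Z' (mem_powerset.2 (hZ'.trans hZA))) C
    simpa [ψ] using hψ

theorem exists_large_subset_card_add_three_le [AddCommGroup G] {A : Finset G} (hA : A.Nonempty) :
    ∃ Z ⊆ A, #A ≤ 2 * #Z ∧
      (#(Z + A + A + A) : ℝ) ≤ (2 * (#(A + A) / #A)) ^ 3 * #Z := by
  obtain ⟨Z, hZA, hZ, h⟩ := exists_large_subset_forall_card_add_add_le A hA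
  set κ : ℝ := 2 * (#(A + A) / #A)
  have hκ : 0 ≤ κ := by positivity
  refine ⟨Z, hZA, hZ, ?_⟩
  calc (#(Z + A + A + A) : ℝ) = #(A + A + Z + A) := by congr 2; ac_rfl
    _ ≤ κ * #(A + A + Z) := h _
    _ = κ * #(A + Z + A) := by rw [add_right_comm]
    _ ≤ κ * (κ * #(A + Z)) := by gcongr; exact h _
    _ = κ * (κ * #(0 + Z + A)) := by rw [zero_add, add_comm Z]
    _ ≤ κ * (κ * (κ * #(0 + Z))) := by gcongr; exact h _
    _ = κ ^ 3 * #Z := by rw [zero_add]; ring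

end Petridis

section Covering

variable {G : Type*} [AddCommGroup G] [DecidableEq G]

theorem sum_addConvolution (U C : Finset G) : ∑ x ∈ U + C, U.addConvolution C x = #U * #C := by
  rw [← card_product]
  exact (card_eq_sum_card_fiberwise fun _ h ↦
    add_mem_add (mem_product.1 h).1 (mem_product.1 h).2).symm

theorem addEnergy_neg_right (U C : Finset G) : E[U, -C] = E[U, C] := by
  refine card_nbij' (fun q ↦ (q.1, -q.2.2, -q.2.1)) (fun q ↦ (q.1, -q.2.2, -q.2.1)) ?_ ?_
    (by simp [Set.LeftInvOn]) (by simp [Set.LeftInvOn, Set.RightInvOn])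
  · rintro ⟨⟨a, b⟩, c, d⟩ h
    simp only [mem_coe, mem_filter, mem_product, mem_neg'] at h ⊢
    grind
  · rintro ⟨⟨a, b⟩, c, d⟩ h
    simp only [mem_coe, mem_filter, mem_product, mem_neg', neg_neg] at h ⊢
    grind

theorem exists_card_mul_card_le_card_sub_mul_card_inter_vadd (U C : Finset G) :
    ∃ t : G, #U * #C ≤ #(U - C) * #(U ∩ (t +ᵥ C)) := by
  obtain rfl | hU := U.eq_empty_or_nonempty
  · simp
  obtain rfl | hC := C.eq_empty_or_nonempty
  · simp
  obtain ⟨t, -, ht⟩ := exists_le_of_sum_le (hU.sub hC)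
    (f := fun _ ↦ #U * #C) (g := fun t : G ↦ #(U - C) * #(U ∩ (t +ᵥ C))) (by
      simp_rw [← mul_sum, sum_const, smul_eq_mul, card_inter_vadd, sub_eq_add_neg,
        sum_addConvolution, card_neg, mul_left_comm #(U + -C), le_refl])
  exact ⟨t, ht⟩

theorem exists_addEnergy_le_card_mul_card_inter_vadd (U C : Finset G) :
    ∃ t : G, E[U, C] ≤ #U * #C * #(U ∩ (t +ᵥ C)) := by
  obtain rfl | hU := U.eq_empty_or_nonempty
  · simp
  obtain rfl | hC := C.eq_empty_or_nonempty
  · simp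
  obtain ⟨t, -, ht⟩ := exists_max_image (U + -C) (U.addConvolution (-C)) (hU.add hC.neg)
  refine ⟨t, ?_⟩
  calc E[U, C] = ∑ x ∈ U + -C, U.addConvolution (-C) x ^ 2 := by
        rw [← addEnergy_neg_right, addEnergy_eq_sum_sq']; rfl
    _ ≤ ∑ x ∈ U + -C, U.addConvolution (-C) x * U.addConvolution (-C) t := by
        gcongr with x hx; rw [sq]; gcongr; exact ht x hx
    _ = #U * #C * #(U ∩ (t +ᵥ C)) := by
        rw [← sum_mul, sum_addConvolution, card_neg, card_inter_vadd]

theorem exists_card_mul_card_le_card_add_mul_card_inter_vadd (U C : Finset G) :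
    ∃ t : G, #U * #C ≤ #(U + C) * #(U ∩ (t +ᵥ C)) := by
  obtain rfl | hU := U.eq_empty_or_nonempty
  · simp
  obtain rfl | hC := C.eq_empty_or_nonempty
  · simp
  obtain ⟨t, ht⟩ := exists_addEnergy_le_card_mul_card_inter_vadd U C
  refine ⟨t, le_of_mul_le_mul_left ?_ (mul_pos hU.card_pos hC.card_pos)⟩
  calc #U * #C * (#U * #C) = #U ^ 2 * #C ^ 2 := by ring
    _ ≤ #(U + C) * E[U, C] := le_card_add_mul_addEnergy U C
    _ ≤ #(U + C) * (#U * #C * #(U ∩ (t +ᵥ C))) := by gcongr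
    _ = #U * #C * (#(U + C) * #(U ∩ (t +ᵥ C))) := by ring

theorem card_inter_add_add_card_sdiff_inter_vadd_le (Y T C : Finset G) (t : G) :
    #(Y ∩ (T + C)) + #(Y \ (T + C) ∩ (t +ᵥ C)) ≤ #(Y ∩ (insert t T + C)) := by
  rw [← card_union_of_disjoint (by grind [disjoint_left]), insert_eq, union_add, ← singleton_vadd,
    vadd_eq_add]
  exact card_le_card (by grind)

/-- The set `T` maximises the number of covered points minus a fixed cost per translate. -/
theorem exists_covering_of_forall_card_inter_vadd {Y C : Finset G} {L ε : ℝ} (hL : 0 ≤ L)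
    (hε : 0 < ε) (h : ∀ U ⊆ Y, U.Nonempty → ∃ t : G, (#U : ℝ) ≤ L * #(U ∩ (t +ᵥ C))) :
    ∃ T : Finset G, (#T : ℝ) ≤ L / ε ∧ (#(Y \ (T + C)) : ℝ) ≤ ε * #Y := by
  obtain rfl | hY := Y.eq_empty_or_nonempty
  · exact ⟨∅, by simpa using by positivity, by simp⟩
  have hYpos : (0 : ℝ) < #Y := mod_cast hY.card_pos
  let φ : Finset G → ℝ := fun T ↦ L * #(Y ∩ (T + C)) - ε * #Y * #T
  obtain ⟨T, hT, hmax⟩ := exists_max_image (Y - C).powerset φ ⟨∅, empty_mem_powerset _⟩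
  rw [mem_powerset] at hT
  refine ⟨T, ?_, ?_⟩
  · have hφ : 0 ≤ φ T := by simpa [φ] using hmax ∅ (empty_mem_powerset _)
    have hYT : L * #(Y ∩ (T + C)) ≤ L * #Y := by gcongr; exact inter_subset_left
    rw [le_div_iff₀ hε]
    refine le_of_mul_le_mul_right ?_ hYpos
    simp only [φ] at hφ
    linarith
  · by_contra! hlarge
    set U := Y \ (T + C)
    have hUpos : (0 : ℝ) < #U := lt_trans (by positivity) hlarge
    obtain ⟨t, ht⟩ := h U sdiff_subset (card_pos.1 (mod_cast hUpos))
    have hne : (U ∩ (t +ᵥ C)).Nonempty := by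
      rw [nonempty_iff_ne_empty]
      intro hempty
      rw [hempty, card_empty, Nat.cast_zero, mul_zero] at ht
      exact hUpos.not_ge ht
    have htY : t ∈ Y - C := by
      obtain ⟨y, hy⟩ := hne
      obtain ⟨hyU, hyC⟩ := mem_inter.1 hy
      obtain ⟨c, hc, rfl⟩ := mem_vadd_finset.1 hyC
      exact mem_sub.2 ⟨_, sdiff_subset hyU, c, hc, by simp⟩
    have hφ := hmax (insert t T) (mem_powerset.2 (insert_subset htY hT))
    have hgain : (#(Y ∩ (T + C)) + #(U ∩ (t +ᵥ C)) : ℝ) ≤ #(Y ∩ (insert t T + C)) :=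
      mod_cast card_inter_add_add_card_sdiff_inter_vadd_le Y T C t
    have hcost : (#(insert t T) : ℝ) ≤ #T + 1 := mod_cast card_insert_le t T
    simp only [φ] at hφ
    have h₁ := mul_le_mul_of_nonneg_left hgain hL
    have h₂ := mul_le_mul_of_nonneg_left hcost (mul_pos hε hYpos).le
    linarith

end Covering

section Dilates

theorem card_finsetSum_le_prod_card {ι G : Type*} [AddCommMonoid G] [DecidableEq G]
    (s : Finset ι) (T : ι → Finset G) : #(∑ i ∈ s, T i) ≤ ∏ i ∈ s, #(T i) := by
  classical
  induction s using Finset.induction_on with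
  | empty => simp
  | insert i s hi ih =>
    rw [sum_insert hi, prod_insert hi]
    exact card_add_le.trans (by gcongr)

theorem add_smul_finset_subset {R M : Type*} [Semiring R] [AddCommMonoid M] [Module R M]
    [DecidableEq M] (a b : R) (S : Finset M) : (a + b) • S ⊆ a • S + b • S := by
  refine image_subset_iff.2 fun x hx ↦ ?_
  rw [add_smul]
  exact add_mem_add (smul_mem_smul_finset hx) (smul_mem_smul_finset hx)

theorem card_le_two_mul_card_filter_forall_mem {ι α : Type*} [Fintype ι] [Nonempty ι]
    [DecidableEq α] {B : Finset α} {Y : ι → Finset α}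
    (h : ∀ i, (#(B \ Y i) : ℝ) ≤ (2 * Fintype.card ι : ℝ)⁻¹ * #B) :
    #B ≤ 2 * #{y ∈ B | ∀ i, y ∈ Y i} := by
  have hbad : B \ {y ∈ B | ∀ i, y ∈ Y i} ⊆ univ.biUnion fun i ↦ B \ Y i := fun y hy ↦ by
    simp only [mem_sdiff, mem_filter, not_and, not_forall] at hy
    obtain ⟨i, hi⟩ := hy.2 hy.1
    exact mem_biUnion.2 ⟨i, mem_univ i, mem_sdiff.2 ⟨hy.1, hi⟩⟩
  have hbad_card : (#(B \ {y ∈ B | ∀ i, y ∈ Y i}) : ℝ) ≤ #B / 2 := calc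
    (#(B \ {y ∈ B | ∀ i, y ∈ Y i}) : ℝ) ≤ ∑ i, #(B \ Y i) :=
      mod_cast (card_le_card hbad).trans card_biUnion_le
    _ ≤ ∑ _i : ι, (2 * Fintype.card ι : ℝ)⁻¹ * #B := by
      push_cast
      exact sum_le_sum fun i _ ↦ h i
    _ = #B / 2 := by rw [sum_const, card_univ, nsmul_eq_mul]; field_simp
  have hsplit := card_sdiff_add_card_eq_card (filter_subset (fun y ↦ ∀ i, y ∈ Y i) B)
  rify at hsplit ⊢
  linarith

variable {F : Type*} [Field F] [DecidableEq F]

/-- The case `f = -a` uses that `U - C` and `U + C` both have popular fibres, which avoids the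
difference set `X - X`. -/
theorem exists_card_mul_card_le_card_add_self_mul_card_inter_vadd {X U C : Finset F} {a f : F}
    (hf : f = a ∨ f = -a) (hUX : U ⊆ f • X) (hCX : C ⊆ a • X) :
    ∃ t : F, #U * #C ≤ #(X + X) * #(U ∩ (t +ᵥ C)) := by
  rcases hf with rfl | rfl
  · obtain ⟨t, ht⟩ := exists_card_mul_card_le_card_add_mul_card_inter_vadd U C
    have hsum : #(U + C) ≤ #(X + X) := calc
      #(U + C) ≤ #(f • (X + X)) := by
        rw [smul_add]
        exact card_le_card (add_subset_add hUX hCX)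
      _ ≤ #(X + X) := card_image_le
    exact ⟨t, ht.trans (by gcongr)⟩
  · obtain ⟨t, ht⟩ := exists_card_mul_card_le_card_sub_mul_card_inter_vadd U C
    have hsum : #(U - C) ≤ #(X + X) := calc
      #(U - C) ≤ #(-a • (X + X)) := by
        rw [smul_add, sub_eq_add_neg]
        refine card_le_card (add_subset_add hUX ?_)
        simpa [neg_smul_finset] using neg_subset_neg hCX
      _ ≤ #(X + X) := card_image_le
    exact ⟨t, ht.trans (by gcongr)⟩

theorem exists_covering_smul {X B : Finset F} {a e f : F} {N ε : ℝ} (ha : a ≠ 0)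
    (hf : f = a ∨ f = -a) (hBX : B ⊆ X) (hN : 0 < N) (hNa : N ≤ #(a • X ∩ e • X)) (hε : 0 < ε) :
    ∃ Y ⊆ B, ∃ T : Finset F, (#(B \ Y) : ℝ) ≤ ε * #B ∧ (#T : ℝ) ≤ #(X + X) / N / ε ∧
      f • Y ⊆ T + e • X := by
  set C := a • X ∩ e • X
  have hf0 : f ≠ 0 := by rcases hf with rfl | rfl <;> simpa using ha
  obtain ⟨T, hT, hrest⟩ := exists_covering_of_forall_card_inter_vadd (Y := f • B) (C := C)
    (L := #(X + X) / N) (by positivity) hε fun U hUB _ ↦ by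
      obtain ⟨t, ht⟩ := exists_card_mul_card_le_card_add_self_mul_card_inter_vadd hf
        (hUB.trans (smul_finset_subset_smul_finset hBX)) inter_subset_left
      refine ⟨t, ?_⟩
      rw [div_mul_eq_mul_div, le_div_iff₀ hN]
      calc (#U : ℝ) * N ≤ #U * #C := by gcongr
        _ ≤ #(X + X) * #(U ∩ (t +ᵥ C)) := mod_cast ht
  refine ⟨{y ∈ B | f • y ∈ T + C}, filter_subset _ _, T, ?_, hT, ?_⟩
  · have hsub : f • (B \ {y ∈ B | f • y ∈ T + C}) ⊆ f • B \ (T + C) := fun x hx ↦ by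
      obtain ⟨y, hy, rfl⟩ := mem_smul_finset.1 hx
      simp only [mem_sdiff, mem_filter, not_and] at hy
      exact mem_sdiff.2 ⟨smul_mem_smul_finset hy.1, hy.2 hy.1⟩
    calc (#(B \ {y ∈ B | f • y ∈ T + C}) : ℝ) ≤ #(f • B \ (T + C)) := by
          rw [← card_smul_finset₀ hf0]
          exact mod_cast card_le_card hsub
      _ ≤ ε * #B := by rwa [card_smul_finset₀ hf0] at hrest
  · refine fun x hx ↦ ?_
    obtain ⟨y, hy, rfl⟩ := mem_smul_finset.1 hx
    exact add_subset_add_left inter_subset_right (mem_filter.1 hy).2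

theorem exists_large_subset_card_sum_smul_le {ι : Type*} [Fintype ι] [Nonempty ι]
    {X B : Finset F} {e : F} {N : ℝ} {f : ι → F} (hBX : B ⊆ X) (h0 : 0 ∉ B) (hN : 0 < N)
    (hNB : ∀ a ∈ B, N ≤ #(a • X ∩ e • X)) (hf : ∀ i, ∃ a ∈ B, f i = a ∨ f i = -a) :
    ∃ Y ⊆ B, #B ≤ 2 * #Y ∧
      (#(∑ i, f i • Y) : ℝ) ≤
        (2 * Fintype.card ι * #(X + X) / N) ^ Fintype.card ι * #(∑ _i : ι, X) := by
  choose a haB hfa using hf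
  choose Y _ T hBY hT hYT using fun i ↦
    exists_covering_smul (ε := (2 * Fintype.card ι : ℝ)⁻¹) (ne_of_mem_of_not_mem (haB i) h0)
      (hfa i) hBX hN (hNB _ (haB i)) (by positivity)
  refine ⟨{y ∈ B | ∀ i, y ∈ Y i}, filter_subset _ _, ?_, ?_⟩
  · exact card_le_two_mul_card_filter_forall_mem hBY
  · have hsub : ∑ i, f i • {y ∈ B | ∀ i, y ∈ Y i} ⊆ ∑ i, T i + e • ∑ _i : ι, X := by
      rw [smul_sum, ← sum_add_distrib]
      refine sum_le_sum fun i _ ↦ (smul_finset_subset_smul_finset fun y hy ↦ ?_).trans (hYT i)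
      exact (mem_filter.1 hy).2 i
    have hprod : (∏ i, #(T i) : ℝ) ≤ (2 * Fintype.card ι * #(X + X) / N) ^ Fintype.card ι := by
      refine (prod_le_prod (fun i _ ↦ by positivity) fun i _ ↦ hT i).trans_eq ?_
      rw [prod_const, card_univ, div_inv_eq_mul]
      ring
    calc (#(∑ i, f i • {y ∈ B | ∀ i, y ∈ Y i}) : ℝ)
        ≤ #(∑ i, T i) * #(e • ∑ _i : ι, X) := mod_cast (card_le_card hsub).trans card_add_le
      _ ≤ (∏ i, #(T i) : ℝ) * #(∑ _i : ι, X) := by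
          refine mul_le_mul ?_ ?_ (by positivity) (by positivity)
          · exact mod_cast card_finsetSum_le_prod_card univ T
          · exact mod_cast card_image_le
      _ ≤ _ := by gcongr

/-- As `x / 0 = 0`, a degenerate quotient is `0`, which is also a quotient with nonzero
denominator. -/
theorem exists_eq_div_of_mem_sub_div_sub {B : Finset F} (hB : B.Nontrivial) {r : F}
    (hr : r ∈ (B - B) / (B - B)) :
    ∃ a ∈ B, ∃ b ∈ B, ∃ c ∈ B, ∃ d ∈ B, c - d ≠ 0 ∧ r = (a - b) / (c - d) := by
  obtain ⟨_, hab, _, hcd, rfl⟩ := mem_div.1 hr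
  obtain ⟨a, ha, b, hb, rfl⟩ := mem_sub.1 hab
  obtain ⟨c, hc, d, hd, rfl⟩ := mem_sub.1 hcd
  obtain hcd0 | hcd0 := eq_or_ne (c - d) 0
  · obtain ⟨c', hc', d', hd', hne⟩ := hB
    exact ⟨a, ha, a, ha, c', hc', d', hd', sub_ne_zero.2 hne, by simp [hcd0]⟩
  · exact ⟨a, ha, b, hb, c, hc, d, hd, hcd0, rfl⟩

theorem exists_large_subset_card_add_smul_le {X B : Finset F} {e r : F} {N : ℝ} (hBX : B ⊆ X)
    (h0 : 0 ∉ B) (hN : 0 < N) (hNB : ∀ a ∈ B, N ≤ #(a • X ∩ e • X))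
    (hB : B.Nontrivial) (hr : r ∈ (B - B) / (B - B)) :
    ∃ Y ⊆ B, #B ≤ 2 * #Y ∧
      (#(Y + r • Y) : ℝ) ≤ (8 * #(X + X) / N) ^ 4 * #(X + X + X + X) := by
  obtain ⟨a, ha, b, hb, c, hc, d, hd, hcd, rfl⟩ := exists_eq_div_of_mem_sub_div_sub hB hr
  obtain ⟨Y, hYB, hY, hsum⟩ := exists_large_subset_card_sum_smul_le (f := ![c, -d, a, -b]) hBX h0
    hN hNB fun i ↦ by
      fin_cases i
      exacts [⟨c, hc, .inl rfl⟩, ⟨d, hd, .inr rfl⟩, ⟨a, ha, .inl rfl⟩, ⟨b, hb, .inr rfl⟩]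
  have hsub : (c - d) • (Y + ((a - b) / (c - d)) • Y) ⊆ ∑ i, ![c, -d, a, -b] i • Y := by
    rw [smul_add, smul_smul, mul_div_cancel₀ _ hcd, Fin.sum_univ_four]
    simp only [sub_eq_add_neg, add_assoc]
    refine (add_subset_add (add_smul_finset_subset c (-d) Y)
      (add_smul_finset_subset a (-b) Y)).trans_eq ?_
    rw [add_assoc]
    rfl
  refine ⟨Y, hYB, hY, ?_⟩
  calc (#(Y + ((a - b) / (c - d)) • Y) : ℝ)
      = #((c - d) • (Y + ((a - b) / (c - d)) • Y)) := by rw [card_smul_finset₀ hcd]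
    _ ≤ #(∑ i, ![c, -d, a, -b] i • Y) := mod_cast card_le_card hsub
    _ ≤ (8 * #(X + X) / N) ^ 4 * #(X + X + X + X) := by
      refine hsum.trans_eq ?_
      rw [Fin.sum_univ_four, Fintype.card_fin]
      norm_num

end Dilates

section Pivot

theorem addEnergy_eq_card_mul_card_of_injOn {G : Type*} [Add G] [DecidableEq G] {s t : Finset G}
    (h : Set.InjOn (fun x : G × G ↦ x.1 + x.2) (s ×ˢ t : Finset (G × G))) :
    E[s, t] = #s * #t := by
  rw [addEnergy_eq_card_filter, ← card_product, ← diag_card (s ×ˢ t)]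
  congr 1
  ext ⟨x, y⟩
  rw [mem_filter, mem_product, mem_diag]
  constructor
  · rintro ⟨⟨hx, hy⟩, hxy⟩
    exact ⟨hx, h hx hy hxy⟩
  · rintro ⟨hx, hxy : x = y⟩
    subst hxy
    exact ⟨⟨hx, hx⟩, rfl⟩

theorem exists_mem_add_one_notMem {n : ℕ} [NeZero n] {S : Finset (ZMod n)} (h0 : 0 ∈ S)
    (hS : S ≠ univ) : ∃ r ∈ S, r + 1 ∉ S := by
  by_contra! hsucc
  have hcast (k : ℕ) : (k : ZMod n) ∈ S := by
    induction k with
    | zero => simpa using h0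
    | succ k ih => simpa using hsucc _ ih
  exact hS (eq_univ_of_forall fun x ↦ ZMod.natCast_zmod_val x ▸ hcast x.val)

variable {F : Type*} [Field F] [DecidableEq F]

theorem addEnergy_smul_right {A B : Finset F} {ξ : F} (hξ : ξ ≠ 0) :
    E[A, ξ • B] =
      #{q ∈ (A ×ˢ A) ×ˢ B ×ˢ B | q.1.1 + ξ * q.2.1 = q.1.2 + ξ * q.2.2} := by
  refine (card_nbij' (fun q ↦ (q.1, ξ * q.2.1, ξ * q.2.2))
    (fun q ↦ (q.1, ξ⁻¹ * q.2.1, ξ⁻¹ * q.2.2)) ?_ ?_ ?_ ?_).symm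
  · rintro ⟨⟨a, b⟩, c, d⟩ h
    simp_all [mem_smul_finset]
  · rintro ⟨⟨a, b⟩, c, d⟩ h
    simp only [coe_filter, mem_product, mem_smul_finset, smul_eq_mul, Set.mem_ofPred_eq] at h ⊢
    grind
  · rintro ⟨⟨a, b⟩, c, d⟩ -
    simp [hξ]
  · rintro ⟨⟨a, b⟩, c, d⟩ -
    simp [hξ]

theorem card_filter_add_mul_eq_le_one {a b c d : F} [Fintype F] (h : ¬(a = b ∧ c = d)) :
    #{ξ ∈ univ.erase (0 : F) | a + ξ * c = b + ξ * d} ≤ 1 := by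
  rw [card_le_one]
  simp only [mem_filter]
  rintro ξ ⟨-, hξ⟩ η ⟨-, hη⟩
  grind

theorem exists_addEnergy_smul_le [Fintype F] {A B : Finset F}
    (h : #A * #B ≤ Fintype.card F) : ∃ ξ : F, ξ ≠ 0 ∧ E[A, ξ • B] ≤ 2 * (#A * #B) := by
  set Q := (A ×ˢ A) ×ˢ B ×ˢ B
  let units := univ.erase (0 : F)
  have hunits : #units + 1 = Fintype.card F := card_erase_add_one (mem_univ 0)
  have hdiag : #{q ∈ Q | q.1.1 = q.1.2 ∧ q.2.1 = q.2.2} = #A * #B := by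
    rw [filter_product (fun q : F × F ↦ q.1 = q.2) fun q : F × F ↦ q.1 = q.2, card_product]
    simp only [← diag_eq_filter, diag_card]
  have hsplit : #A * #B + #{q ∈ Q | ¬(q.1.1 = q.1.2 ∧ q.2.1 = q.2.2)} = (#A * #B) ^ 2 := by
    rw [← hdiag, card_filter_add_card_filter_not, hdiag]
    simp only [Q, card_product]
    ring
  have htotal : ∑ ξ ∈ units, E[A, ξ • B] ≤ ∑ _ξ ∈ units, 2 * (#A * #B) := calc
    ∑ ξ ∈ units, E[A, ξ • B]
      = ∑ ξ ∈ units, #{q ∈ Q | q.1.1 + ξ * q.2.1 = q.1.2 + ξ * q.2.2} :=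
        sum_congr rfl fun ξ hξ ↦ addEnergy_smul_right (ne_of_mem_erase hξ)
    _ = ∑ q ∈ Q, #{ξ ∈ units | q.1.1 + ξ * q.2.1 = q.1.2 + ξ * q.2.2} :=
        sum_card_bipartiteAbove_eq_sum_card_bipartiteBelow _
    _ ≤ ∑ q ∈ Q, if q.1.1 = q.1.2 ∧ q.2.1 = q.2.2 then #units else 1 := by
        gcongr with q
        split_ifs with hq
        · exact card_filter_le _ _
        · exact card_filter_add_mul_eq_le_one hq
    _ = #A * #B * #units + #{q ∈ Q | ¬(q.1.1 = q.1.2 ∧ q.2.1 = q.2.2)} := by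
        rw [sum_ite, sum_const, sum_const, hdiag, smul_eq_mul, smul_eq_mul, mul_one]
    _ ≤ #A * #B * #units + #A * #B * #units := by
        gcongr
        nlinarith
    _ = ∑ _ξ ∈ units, 2 * (#A * #B) := by
        rw [sum_const, smul_eq_mul]
        ring
  obtain ⟨ξ, hξ, hE⟩ := exists_le_of_sum_le ⟨1, mem_erase.2 ⟨one_ne_zero, mem_univ _⟩⟩ htotal
  exact ⟨ξ, ne_of_mem_erase hξ, hE⟩

theorem addEnergy_smul_le_of_notMem_sub_div_sub {B : Finset F} {ξ : F}
    (hξ : ξ ∉ (B - B) / (B - B)) : E[B, ξ • B] ≤ #B ^ 2 := by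
  rw [addEnergy_eq_card_mul_card_of_injOn, sq]
  · exact Nat.mul_le_mul_left _ card_image_le
  · rintro ⟨x, _⟩ hx ⟨y, _⟩ hy hxy
    obtain ⟨hxB, hu⟩ := mem_product.1 hx
    obtain ⟨hyB, hv⟩ := mem_product.1 hy
    obtain ⟨u, huB, rfl⟩ := mem_smul_finset.1 hu
    obtain ⟨v, hvB, rfl⟩ := mem_smul_finset.1 hv
    have huv : u = v := by
      by_contra hne
      refine hξ (mem_div.2 ⟨y - x, sub_mem_sub hyB hxB, u - v, sub_mem_sub huB hvB, ?_⟩)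
      rw [div_eq_iff (sub_ne_zero.2 hne)]
      simp only [smul_eq_mul] at hxy
      linear_combination -hxy
    subst huv
    simpa using hxy

theorem exists_pivot {p : ℕ} [Fact p.Prime] {B : Finset (ZMod p)} (hB : B.Nonempty)
    (hBp : #B ^ 2 ≤ p) :
    ∃ r ∈ (B - B) / (B - B), ∃ ξ, ξ ≠ 0 ∧ (ξ = r ∨ ξ = r + 1) ∧ E[B, ξ • B] ≤ 2 * #B ^ 2 := by
  have h0 : (0 : ZMod p) ∈ (B - B) / (B - B) := by
    obtain ⟨b, hb⟩ := hB
    exact mem_div.2 ⟨b - b, sub_mem_sub hb hb, b - b, sub_mem_sub hb hb, by simp⟩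
  by_cases huniv : ((B - B) / (B - B) : Finset (ZMod p)) = univ
  · obtain ⟨ξ, hξ, hE⟩ := exists_addEnergy_smul_le (A := B) (B := B) (by rwa [ZMod.card, ← sq])
    exact ⟨ξ, huniv ▸ mem_univ ξ, ξ, hξ, .inl rfl, by rwa [sq]⟩
  · obtain ⟨r, hr, hr1⟩ := exists_mem_add_one_notMem h0 huniv
    refine ⟨r, hr, r + 1, fun h ↦ hr1 (h ▸ h0), .inr rfl, ?_⟩
    exact (addEnergy_smul_le_of_notMem_sub_div_sub hr1).trans (by omega)

theorem card_add_smul_le_mul_card_add_smul {Y Z : Finset F} {r ξ : F} {κ : ℝ} (hκ : 1 ≤ κ)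
    (h : ∀ C : Finset F, (#(C + Z + Y) : ℝ) ≤ κ * #(C + Z)) (hr : ξ = r ∨ ξ = r + 1) :
    (#(Z + ξ • Y) : ℝ) ≤ κ * #(Z + r • Y) := by
  rcases hr with rfl | rfl
  · exact le_mul_of_one_le_left (by positivity) hκ
  · calc (#(Z + (r + 1) • Y) : ℝ) ≤ #(r • Y + Z + Y) := by
          rw [add_comm _ Z, add_assoc]
          refine mod_cast card_le_card (add_subset_add_left ?_)
          simpa using add_smul_finset_subset r 1 Y
      _ ≤ κ * #(r • Y + Z) := h _
      _ = κ * #(Z + r • Y) := by rw [add_comm]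

theorem card_pow_five_le_card_add_self_mul_card_add_smul {B Y : Finset F} {r ξ : F} (hYB : Y ⊆ B)
    (hξ : ξ ≠ 0) (hr : ξ = r ∨ ξ = r + 1) :
    #Y ^ 5 ≤ 8 * #(Y + Y) * #(Y + r • Y) * E[B, ξ • B] := by
  obtain rfl | hY := Y.eq_empty_or_nonempty
  · simp
  obtain ⟨Z, hZY, hZ, hgrowth⟩ := exists_large_subset_forall_card_add_add_le Y hY
  have hYpos : (0 : ℝ) < #Y := mod_cast hY.card_pos
  set κ : ℝ := 2 * (#(Y + Y) / #Y) with hκ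
  have hκ1 : 1 ≤ κ := by
    have : (#Y : ℝ) ≤ #(Y + Y) := mod_cast card_le_card_add_self
    rw [hκ, mul_div_assoc', one_le_div hYpos]
    linarith
  have hpivot : (#(Z + ξ • Y) : ℝ) ≤ κ * #(Z + r • Y) :=
    card_add_smul_le_mul_card_add_smul hκ1 hgrowth hr
  have henergy : (#Z ^ 2 * #Y ^ 2 : ℝ) ≤ #(Z + ξ • Y) * E[B, ξ • B] := by
    have := (le_card_add_mul_addEnergy Z (ξ • Y)).trans (Nat.mul_le_mul_left _
      (addEnergy_mono (hZY.trans hYB) (smul_finset_subset_smul_finset hYB)))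
    rw [card_smul_finset₀ hξ] at this
    exact mod_cast this
  have hZ' : (#Y : ℝ) ≤ 2 * #Z := mod_cast hZ
  have hreal : (#Y ^ 5 : ℝ) ≤ 8 * #(Y + Y) * #(Y + r • Y) * E[B, ξ • B] := calc
    (#Y ^ 5 : ℝ) = #Y ^ 2 * #Y ^ 2 * #Y := by ring
    _ ≤ (2 * #Z) ^ 2 * #Y ^ 2 * #Y := by gcongr
    _ = 4 * (#Z ^ 2 * #Y ^ 2) * #Y := by ring
    _ ≤ 4 * (κ * #(Z + r • Y) * E[B, ξ • B]) * #Y := by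
        grw [henergy, hpivot]
    _ ≤ 4 * (κ * #(Y + r • Y) * E[B, ξ • B]) * #Y := by
        gcongr
    _ = 8 * #(Y + Y) * #(Y + r • Y) * E[B, ξ • B] := by
        rw [hκ]
        field_simp
        ring
  exact_mod_cast hreal

end Pivot

section WeakType

theorem mul_rpow_sub_one_le_rpow_sub_rpow {x θ : ℝ} (hx : 1 ≤ x) (hθ₀ : 0 ≤ θ) (hθ₁ : θ ≤ 1) :
    θ * x ^ (θ - 1) ≤ x ^ θ - (x - 1) ^ θ := by
  have hx₀ : 0 < x := by linarith
  have hbernoulli : (1 + -x⁻¹) ^ θ ≤ 1 + θ * -x⁻¹ :=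
    rpow_one_add_le_one_add_mul_self (neg_le_neg (inv_le_one_of_one_le₀ hx)) hθ₀ hθ₁
  calc θ * x ^ (θ - 1) = x ^ θ - x ^ θ * (1 + θ * -x⁻¹) := by
        rw [Real.rpow_sub_one hx₀.ne']
        ring
    _ ≤ x ^ θ - x ^ θ * (1 + -x⁻¹) ^ θ := by gcongr
    _ = x ^ θ - (x - 1) ^ θ := by
        rw [← Real.mul_rpow hx₀.le (by linarith [inv_le_one_of_one_le₀ hx])]
        congr 2
        field_simp
        ring

variable {α : Type*}

/-- Adjoining the elements in decreasing order of `f` compares the sum with a telescoping one;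
summing over dyadic level sets would cost a factor `log #s`. -/
theorem sum_le_of_forall_card_filter_rpow_mul_le (s : Finset α) {f : α → ℝ} {θ T : ℝ}
    (hθ₀ : 0 < θ) (hθ₁ : θ ≤ 1)
    (h : ∀ t, 0 < t → (#{a ∈ s | t ≤ f a} : ℝ) ^ (1 - θ) * t ≤ T) :
    ∑ a ∈ s, f a ≤ T / θ * (#s : ℝ) ^ θ := by
  classical
  have hT : 0 ≤ T := le_trans (by positivity) (h 1 one_pos)
  induction s using Finset.induction_on_min_value f with
  | empty => simp [Real.zero_rpow hθ₀.ne']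
  | insert a s ha hmin ih =>
    have hs : ∑ x ∈ s, f x ≤ T / θ * (#s : ℝ) ^ θ := ih fun t ht ↦ by
      refine le_trans ?_ (h t ht)
      gcongr
      exact subset_insert a s
    have hcard : (#(insert a s) : ℝ) = #s + 1 := by
      rw [card_insert_of_notMem ha]
      push_cast
      rfl
    have hincr := mul_rpow_sub_one_le_rpow_sub_rpow (x := #s + 1) (by simp) hθ₀.le hθ₁
    rw [add_sub_cancel_right] at hincr
    have hfa : f a ≤ T * (#s + 1 : ℝ) ^ (θ - 1) := by
      obtain hneg | hpos := le_or_gt (f a) 0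
      · exact hneg.trans (by positivity)
      · have hall : {x ∈ insert a s | f a ≤ f x} = insert a s :=
          filter_true_of_mem (by simpa using hmin)
        have hlevel := h (f a) hpos
        rw [hall, hcard, ← neg_sub, Real.rpow_neg (by positivity), inv_mul_le_iff₀ (by positivity)]
          at hlevel
        linarith
    calc ∑ x ∈ insert a s, f x = f a + ∑ x ∈ s, f x := sum_insert ha
      _ ≤ T / θ * (θ * (#s + 1 : ℝ) ^ (θ - 1)) + T / θ * (#s : ℝ) ^ θ := by
          refine add_le_add (hfa.trans_eq ?_) hs
          field_simp
      _ ≤ T / θ * ((#s + 1 : ℝ) ^ θ - (#s : ℝ) ^ θ) + T / θ * (#s : ℝ) ^ θ := by gcongr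
      _ = T / θ * (#(insert a s) : ℝ) ^ θ := by
          rw [hcard]
          ring

theorem sum_pow_le_of_forall_card_filter_pow_mul_pow_le (s : Finset α) {f : α → ℝ} {Q : ℝ} (k : ℕ)
    (hf : ∀ a ∈ s, 0 ≤ f a)
    (h : ∀ t, 0 < t → (#{a ∈ s | t ≤ f a} : ℝ) ^ k * t ^ (k + 1) ≤ Q) :
    (∑ a ∈ s, f a) ^ (k + 1) ≤ (k + 1) ^ (k + 1) * Q * #s := by
  have hk : ((k : ℝ) + 1) ≠ 0 := by positivity
  have hQ : 0 ≤ Q := le_trans (by positivity) (h 1 one_pos)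
  have hroot {x : ℝ} (hx : 0 ≤ x) : (x ^ (k + 1 : ℝ)⁻¹) ^ (k + 1) = x := by
    exact_mod_cast Real.rpow_inv_natCast_pow hx k.succ_ne_zero
  have hsum := sum_le_of_forall_card_filter_rpow_mul_le s (f := f) (θ := (k + 1 : ℝ)⁻¹)
    (T := Q ^ (k + 1 : ℝ)⁻¹) (by positivity) (inv_le_one_of_one_le₀ (by simp)) fun t ht ↦ by
      refine le_of_pow_le_pow_left₀ k.succ_ne_zero (by positivity) ?_
      rw [Nat.succ_eq_add_one, mul_pow, hroot hQ]
      refine le_trans (le_of_eq ?_) (h t ht)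
      rw [← Real.rpow_mul_natCast (by positivity), ← Real.rpow_natCast _ k]
      congr 2
      push_cast
      field_simp
      ring
  calc (∑ a ∈ s, f a) ^ (k + 1)
      ≤ (Q ^ (k + 1 : ℝ)⁻¹ / (k + 1 : ℝ)⁻¹ * (#s : ℝ) ^ (k + 1 : ℝ)⁻¹) ^ (k + 1) :=
        pow_le_pow_left₀ (sum_nonneg hf) hsum _
    _ = (k + 1) ^ (k + 1) * Q * #s := by
        rw [div_inv_eq_mul, mul_pow, mul_pow, hroot hQ, hroot (by positivity)]
        ring

end WeakType

section SumProduct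

theorem mulEnergy_eq_sum_card_inter_smul {G₀ : Type*} [GroupWithZero G₀] [DecidableEq G₀]
    {s : Finset G₀} (hs : 0 ∉ s) (t : Finset G₀) :
    Eₘ[s, t] = ∑ a ∈ s, ∑ b ∈ s, #(a • t ∩ b • t) := by
  rw [mulEnergy, card_filter, sum_product, sum_product]
  refine sum_congr rfl fun a ha ↦ sum_congr rfl fun b hb ↦ ?_
  have ha₀ : a ≠ 0 := ne_of_mem_of_not_mem ha hs
  have hb₀ : b ≠ 0 := ne_of_mem_of_not_mem hb hs
  rw [← card_filter]
  refine card_nbij' (fun x ↦ a * x.1) (fun z ↦ (a⁻¹ * z, b⁻¹ * z)) ?_ ?_ ?_ ?_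
  · rintro ⟨x, y⟩ hxy
    simp only [coe_filter, mem_product, Set.mem_ofPred_eq] at hxy
    exact mem_inter.2 ⟨smul_mem_smul_finset hxy.1.1, mem_smul_finset.2 ⟨y, hxy.1.2, hxy.2.symm⟩⟩
  · intro z hz
    obtain ⟨ha, hb⟩ := mem_inter.1 hz
    rw [← inv_smul_mem_iff₀ ha₀] at ha
    rw [← inv_smul_mem_iff₀ hb₀] at hb
    simp_all
  · rintro ⟨x, y⟩ hxy
    simp only [coe_filter, mem_product, Set.mem_ofPred_eq] at hxy
    exact Prod.ext (inv_mul_cancel_left₀ ha₀ x)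
      (by simpa only [hxy.2] using inv_mul_cancel_left₀ hb₀ y)
  · exact fun z _ ↦ mul_inv_cancel_left₀ ha₀ z

variable {F : Type*} [Field F] [DecidableEq F]

theorem exists_card_mul_card_sq_le_card_mul_mul_sum_card_inter_smul {s : Finset F}
    (hs : s.Nonempty) (hs₀ : 0 ∉ s) (t : Finset F) :
    ∃ e ∈ s, #s * #t ^ 2 ≤ #(s * t) * ∑ a ∈ s, #(a • t ∩ e • t) := by
  refine exists_le_of_sum_le hs ?_
  calc ∑ _e ∈ s, #s * #t ^ 2 = #s ^ 2 * #t ^ 2 := by rw [sum_const, smul_eq_mul]; ring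
    _ ≤ #(s * t) * Eₘ[s, t] := le_card_mul_mul_mulEnergy s t
    _ = ∑ e ∈ s, #(s * t) * ∑ a ∈ s, #(a • t ∩ e • t) := by
        rw [mulEnergy_eq_sum_card_inter_smul hs₀, sum_comm, mul_sum]

variable {p : ℕ} [Fact p.Prime]

theorem card_pow_three_mul_pow_four_le {X B : Finset (ZMod p)} {e : ZMod p} {N : ℝ} (hBX : B ⊆ X)
    (h0 : 0 ∉ B) (hBp : #B ^ 2 ≤ p) (hN : 0 < N) (hNB : ∀ a ∈ B, N ≤ #(a • X ∩ e • X)) :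
    (#B ^ 3 * N ^ 4 : ℝ) ≤ 2 ^ 21 * #(X + X) ^ 5 * #(X + X + X + X) := by
  obtain rfl | ⟨b, hb⟩ := B.eq_empty_or_nonempty
  · simpa using by positivity
  have hX : X.Nonempty := ⟨b, hBX hb⟩
  obtain hB | hB := (B : Set (ZMod p)).subsingleton_or_nontrivial
  · have hB1 : #B ≤ 1 := card_le_one.2 hB
    have hNX : N ≤ #(X + X) := (hNB b hb).trans <| mod_cast
      (card_le_card inter_subset_left).trans (card_image_le.trans card_le_card_add_self)
    have hX2 : (1 : ℝ) ≤ #(X + X) := mod_cast (hX.add hX).card_pos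
    have hX4 : (1 : ℝ) ≤ #(X + X + X + X) := mod_cast (((hX.add hX).add hX).add hX).card_pos
    calc (#B ^ 3 * N ^ 4 : ℝ) ≤ 1 ^ 3 * #(X + X) ^ 4 := by gcongr; exact mod_cast hB1
      _ = 1 * #(X + X) ^ 4 * 1 := by ring
      _ ≤ 2 ^ 21 * #(X + X) ^ 5 * #(X + X + X + X) := by gcongr <;> norm_num
  · obtain ⟨r, hr, ξ, hξ, hξr, hE⟩ := exists_pivot ⟨b, hb⟩ hBp
    obtain ⟨Y, hYB, hY, hYr⟩ := exists_large_subset_card_add_smul_le hBX h0 hN hNB hB hr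
    have hgrowth : (#Y ^ 5 : ℝ) ≤ 8 * #(Y + Y) * #(Y + r • Y) * E[B, ξ • B] :=
      mod_cast card_pow_five_le_card_add_self_mul_card_add_smul hYB hξ hξr
    have hYX : (#(Y + Y) : ℝ) ≤ #(X + X) :=
      mod_cast card_le_card (add_subset_add (hYB.trans hBX) (hYB.trans hBX))
    have hY' : (#B : ℝ) ≤ 2 * #Y := mod_cast hY
    have hE' : (E[B, ξ • B] : ℝ) ≤ 2 * #B ^ 2 := mod_cast hE
    have hBpos : (0 : ℝ) < #B := mod_cast card_pos.2 ⟨b, hb⟩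
    refine le_of_mul_le_mul_right ?_ (pow_pos hBpos 2)
    calc (#B ^ 3 * N ^ 4 * #B ^ 2 : ℝ) = #B ^ 5 * N ^ 4 := by ring
      _ ≤ (2 * #Y) ^ 5 * N ^ 4 := by gcongr
      _ = 2 ^ 5 * #Y ^ 5 * N ^ 4 := by ring
      _ ≤ 2 ^ 5 * (8 * #(X + X) * ((8 * #(X + X) / N) ^ 4 * #(X + X + X + X)) * (2 * #B ^ 2)) *
            N ^ 4 := by
          grw [hgrowth, hYX, hYr, hE']
      _ = 2 ^ 21 * #(X + X) ^ 5 * #(X + X + X + X) * #B ^ 2 := by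
          field_simp
          ring

theorem card_pow_eleven_le {X : Finset (ZMod p)} (h0 : 0 ∉ X) (hXp : #X ^ 2 ≤ p) :
    #X ^ 11 ≤ 2 ^ 29 * #(X + X) ^ 5 * #(X + X + X + X) * #(X * X) ^ 4 := by
  obtain rfl | hX := X.eq_empty_or_nonempty
  · simp
  obtain ⟨e, -, he⟩ := exists_card_mul_card_sq_le_card_mul_mul_sum_card_inter_smul hX h0 X
  have hsum : ((∑ a ∈ X, #(a • X ∩ e • X) : ℕ) ^ 4 : ℝ) ≤
      4 ^ 4 * (2 ^ 21 * #(X + X) ^ 5 * #(X + X + X + X)) * #X := by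
    have := sum_pow_le_of_forall_card_filter_pow_mul_pow_le X (k := 3)
      (f := fun a ↦ (#(a • X ∩ e • X) : ℝ)) (fun _ _ ↦ by positivity) fun t ht ↦
        card_pow_three_mul_pow_four_le (filter_subset _ _) (fun h ↦ h0 (filter_subset _ _ h))
          (le_trans (by gcongr; exact filter_subset _ _) hXp) ht fun a ha ↦ (mem_filter.1 ha).2
    push_cast
    norm_num at this ⊢
    exact this
  refine le_of_mul_le_mul_right ?_ hX.card_pos
  calc #X ^ 11 * #X = (#X * #X ^ 2) ^ 4 := by ring
    _ ≤ (#(X * X) * ∑ a ∈ X, #(a • X ∩ e • X)) ^ 4 := by gcongr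
    _ = #(X * X) ^ 4 * (∑ a ∈ X, #(a • X ∩ e • X)) ^ 4 := mul_pow ..
    _ ≤ #(X * X) ^ 4 * (4 ^ 4 * (2 ^ 21 * #(X + X) ^ 5 * #(X + X + X + X)) * #X) := by
        gcongr
        exact mod_cast hsum
    _ = 2 ^ 29 * #(X + X) ^ 5 * #(X + X + X + X) * #(X * X) ^ 4 * #X := by ring

theorem card_pow_thirteen_le_of_zero_notMem {A : Finset (ZMod p)} (h0 : 0 ∉ A) (hAp : #A ^ 2 ≤ p) :
    #A ^ 13 ≤ 2 ^ 43 * #(A + A) ^ 8 * #(A * A) ^ 4 := by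
  obtain rfl | hA := A.eq_empty_or_nonempty
  · simp
  obtain ⟨X, hXA, hX, hX4⟩ := exists_large_subset_card_add_three_le hA
  have hcard := card_pow_eleven_le (fun h ↦ h0 (hXA h)) (le_trans (by gcongr) hAp)
  have hsum : (#(X + X + X + X) : ℝ) ≤ (2 * (#(A + A) / #A)) ^ 3 * #A := calc
    (#(X + X + X + X) : ℝ) ≤ #(X + A + A + A) := by gcongr
    _ ≤ (2 * (#(A + A) / #A)) ^ 3 * #X := hX4
    _ ≤ (2 * (#(A + A) / #A)) ^ 3 * #A := by gcongr
  rify at hX hcard ⊢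
  calc (#A ^ 13 : ℝ) = #A ^ 11 * #A ^ 2 := by ring
    _ ≤ (2 * #X) ^ 11 * #A ^ 2 := by gcongr
    _ = 2 ^ 11 * #X ^ 11 * #A ^ 2 := by ring
    _ ≤ 2 ^ 11 * (2 ^ 29 * #(X + X) ^ 5 * #(X + X + X + X) * #(X * X) ^ 4) * #A ^ 2 := by gcongr
    _ ≤ 2 ^ 11 * (2 ^ 29 * #(A + A) ^ 5 * ((2 * (#(A + A) / #A)) ^ 3 * #A) * #(A * A) ^ 4) *
          #A ^ 2 := by gcongr
    _ = 2 ^ 43 * #(A + A) ^ 8 * #(A * A) ^ 4 := by field_simp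

theorem card_pow_thirteen_le {A : Finset (ZMod p)} (hA : 2 ≤ #A) (hAp : #A ^ 2 ≤ p) :
    #A ^ 13 ≤ 2 ^ 56 * #(A + A) ^ 8 * #(A * A) ^ 4 := by
  have hsub : A.erase 0 ⊆ A := erase_subset 0 A
  have hcard : #A ≤ 2 * #(A.erase 0) := by
    have := pred_card_le_card_erase (s := A) (a := 0)
    omega
  calc #A ^ 13 ≤ (2 * #(A.erase 0)) ^ 13 := by gcongr
    _ = 2 ^ 13 * #(A.erase 0) ^ 13 := by ring
    _ ≤ 2 ^ 13 * (2 ^ 43 * #(A.erase 0 + A.erase 0) ^ 8 * #(A.erase 0 * A.erase 0) ^ 4) := by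
        gcongr
        exact card_pow_thirteen_le_of_zero_notMem (notMem_erase 0 A) (le_trans (by gcongr) hAp)
    _ ≤ 2 ^ 13 * (2 ^ 43 * #(A + A) ^ 8 * #(A * A) ^ 4) := by gcongr
    _ = 2 ^ 56 * #(A + A) ^ 8 * #(A * A) ^ 4 := by ring

end SumProduct

theorem sum_product_small :
    ∃ c : ℝ, 0 < c ∧ ∀ (p : ℕ), p.Prime → ∀ A : Finset (ZMod p),
      2 ≤ A.card → (A.card : ℝ) ≤ Real.sqrt p →
      c * (A.card : ℝ) ^ ((13 : ℝ) / 12) ≤ max ((A + A).card : ℝ) ((A * A).card : ℝ) := by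
  refine ⟨1 / 32, by norm_num, fun p hp A hA hAp ↦ ?_⟩
  have : Fact p.Prime := ⟨hp⟩
  rw [Real.le_sqrt (by positivity) (by positivity)] at hAp
  set M : ℝ := max #(A + A) #(A * A)
  have hcard : (#A ^ 13 : ℝ) ≤ 2 ^ 56 * #(A + A) ^ 8 * #(A * A) ^ 4 :=
    mod_cast card_pow_thirteen_le hA (mod_cast hAp)
  refine le_of_pow_le_pow_left₀ (n := 12) (by norm_num) (by positivity) ?_
  calc (1 / 32 * (#A : ℝ) ^ ((13 : ℝ) / 12)) ^ 12 = (1 / 32) ^ 12 * #A ^ 13 := by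
        rw [mul_pow, ← Real.rpow_mul_natCast (by positivity), ← Real.rpow_natCast]
        norm_num
    _ ≤ (1 / 32) ^ 12 * (2 ^ 56 * M ^ 8 * M ^ 4) := by
        grw [hcard, show (#(A + A) : ℝ) ≤ M from le_max_left _ _,
          show (#(A * A) : ℝ) ≤ M from le_max_right _ _]
    _ ≤ M ^ 12 := by nlinarith [show 0 ≤ M ^ 12 by positivity]
end

section
/- For every finite A ⊆ F_p with 2 ≤ |A| ≤ p^{1/2}, the inequality |A+A|⁸ · |AA|⁴ ≥ c|A|^{13} holds for an absolute constant c > 0. -/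
/-!
By Plünnecke's inequality half of the nonzero elements of `A` form a set `B` for which
`B + B + B + B` is controlled by `A + A`. Since `B` has multiplicative energy at least
`|B| ^ 4 / |BB|`, there is `e ∈ B` with `∑ a ∈ B, |aB ∩ eB| ≥ |B| ^ 3 / |BB|`, so it suffices to
bound the set `X` of those `a ∈ B` with `|aB ∩ eB| ≥ t`; the bound is
`|X| ^ 3 t ^ 4 ≪ |B + B| ^ 5 |B + B + B + B|`.

On the one hand, for `a, b, c, d ∈ X`, Ruzsa's triangle inequality through the large sets
`aB ∩ eB`, `bB ∩ eB`, `cB ∩ eB` and `dB ∩ eB` gives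
`|aX - bX + cX - dX| t ^ 4 ≤ |X + B| ^ 4 |B + B + B + B|`. On the other hand, some choice of
`a, b, c, d` makes this set large, namely `|X| ^ 3 ≪ |X + X| |X + rX|` for some ratio
`r = (a - b) / (c - d)`: either there is such an `r` for which `r + 1` is not a ratio, and then
`Y + (r + 1)X` has `|Y||X|` elements for every `Y ⊆ X`, while it lies in `Y + X + rX`; or the ratios
are closed under `r ↦ r + 1`, hence contain the prime field, and a typical element of a set of
`|X| ^ 2` of them works.

Finally, `n ^ 3 t ^ 4 ≤ K` is a weak-type bound with exponent `4 / 3 > 1`, so summing it over a set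
of bounded size loses only a constant rather than a logarithm.
-/

open Finset Pointwise

section Pluennecke

variable {G : Type*} [AddCommGroup G] [DecidableEq G]

lemma exists_nonempty_subset_card_add_mul_le {A : Finset G} (hA : A.Nonempty) (B : Finset G) :
    ∃ X ⊆ A, X.Nonempty ∧ ∀ Y ⊆ A, #(X + B) * #Y ≤ #(Y + B) * #X := by
  obtain ⟨X, hX, hmin⟩ := exists_min_image (A.powerset.erase ∅) (fun X ↦ (#(X + B) : ℚ) / #X)
    ⟨A, mem_erase_of_ne_of_mem hA.ne_empty (mem_powerset_self _)⟩
  obtain ⟨hX₀, hXA⟩ := mem_erase.1 hX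
  have hXne : X.Nonempty := nonempty_iff_ne_empty.2 hX₀
  refine ⟨X, mem_powerset.1 hXA, hXne, fun Y hY ↦ ?_⟩
  obtain rfl | hYne := Y.eq_empty_or_nonempty
  · simp
  have h := hmin Y (mem_erase_of_ne_of_mem hYne.ne_empty (mem_powerset.2 hY))
  rw [div_le_div_iff₀ (by exact_mod_cast hXne.card_pos) (by exact_mod_cast hYne.card_pos)] at h
  exact_mod_cast h

lemma exists_nonempty_subset_card_add_nsmul_mul_pow_le {A : Finset G} (hA : A.Nonempty)
    (B : Finset G) :
    ∃ X ⊆ A, X.Nonempty ∧ ∀ k : ℕ, #(X + k • B) * #A ^ k ≤ #(A + B) ^ k * #X := by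
  obtain ⟨X, hXA, hX, hmin⟩ := exists_nonempty_subset_card_add_mul_le hA B
  refine ⟨X, hXA, hX, fun k ↦ ?_⟩
  induction k with
  | zero => simp
  | succ k ih =>
    have petridis : #(X + (k + 1) • B) * #X ≤ #(X + B) * #(X + k • B) := by
      rw [show X + (k + 1) • B = k • B + X + B by rw [succ_nsmul]; abel, add_comm X (k • B)]
      exact pluennecke_petridis_inequality_add (k • B) fun Y hY ↦ hmin Y (hY.trans hXA)
    refine Nat.le_of_mul_le_mul_right ?_ hX.card_pos
    calc #(X + (k + 1) • B) * #A ^ (k + 1) * #X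
        = #(X + (k + 1) • B) * #X * #A ^ (k + 1) := by ring
      _ ≤ #(X + B) * #(X + k • B) * #A ^ (k + 1) := by gcongr
      _ = #(X + B) * #A * (#(X + k • B) * #A ^ k) := by ring
      _ ≤ #(A + B) * #X * (#(A + B) ^ k * #X) := Nat.mul_le_mul (hmin A Subset.rfl) ih
      _ = #(A + B) ^ (k + 1) * #X * #X := by ring

-- Among the subsets obeying the bound take a largest one: if it missed half of `A`, the preceding
-- lemma for its complement would produce a further piece.
lemma exists_large_subset_card_add_nsmul_mul_pow_le (A B : Finset G) (k : ℕ) :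
    ∃ X ⊆ A, #A ≤ 2 * #X ∧ #(X + k • B) * #A ^ k ≤ (2 * #(A + B)) ^ k * #X := by
  obtain ⟨X, hX, hmax⟩ := exists_max_image
    {X ∈ A.powerset | #(X + k • B) * #A ^ k ≤ (2 * #(A + B)) ^ k * #X} card ⟨∅, by simp⟩
  simp only [mem_filter, mem_powerset] at hX hmax
  obtain ⟨hXA, hXk⟩ := hX
  refine ⟨X, hXA, ?_, hXk⟩
  by_contra! hlt
  have hcard : #(A \ X) + #X = #A := card_sdiff_add_card_eq_card hXA
  obtain ⟨Y, hY, hYne, hYk⟩ := exists_nonempty_subset_card_add_nsmul_mul_pow_le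
    (card_pos.1 (by lia) : (A \ X).Nonempty) B
  have hYk' : #(Y + k • B) * #A ^ k ≤ (2 * #(A + B)) ^ k * #Y :=
    calc #(Y + k • B) * #A ^ k ≤ #(Y + k • B) * (2 * #(A \ X)) ^ k := by gcongr; lia
      _ = 2 ^ k * (#(Y + k • B) * #(A \ X) ^ k) := by ring
      _ ≤ 2 ^ k * (#(A \ X + B) ^ k * #Y) := by gcongr 2 ^ k * ?_; exact hYk k
      _ ≤ 2 ^ k * (#(A + B) ^ k * #Y) := by gcongr; exact sdiff_subset
      _ = (2 * #(A + B)) ^ k * #Y := by ring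
  have hXY : #(X ∪ Y) = #X + #Y :=
    card_union_of_disjoint (disjoint_of_subset_right hY disjoint_sdiff)
  have hXYk : #(X ∪ Y + k • B) * #A ^ k ≤ (2 * #(A + B)) ^ k * #(X ∪ Y) :=
    calc #(X ∪ Y + k • B) * #A ^ k ≤ (#(X + k • B) + #(Y + k • B)) * #A ^ k := by
          rw [union_add]
          gcongr
          exact card_union_le _ _
      _ ≤ (2 * #(A + B)) ^ k * #(X ∪ Y) := by
          rw [add_mul, hXY, mul_add]
          exact add_le_add hXk hYk'
  have := hmax (X ∪ Y) ⟨union_subset hXA (hY.trans sdiff_subset), hXYk⟩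
  have := hYne.card_pos
  lia

lemma exists_large_subset_card_nsmul_mul_pow_le (A : Finset G) (k : ℕ) :
    ∃ B ⊆ A, #A ≤ 2 * #B ∧ #((k + 2) • B) * #B ^ k ≤ (2 * #(A + A)) ^ (k + 1) := by
  obtain ⟨B, hBA, hAB, hB⟩ := exists_large_subset_card_add_nsmul_mul_pow_le A A (k + 1)
  refine ⟨B, hBA, hAB, ?_⟩
  obtain rfl | hBne := B.eq_empty_or_nonempty
  · simp [nsmul_empty]
  have hsub : (k + 2) • B ⊆ B + (k + 1) • A := by
    rw [succ_nsmul']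
    exact add_subset_add_left (nsmul_subset_nsmul_left hBA)
  refine Nat.le_of_mul_le_mul_right ?_ hBne.card_pos
  calc #((k + 2) • B) * #B ^ k * #B = #((k + 2) • B) * #B ^ (k + 1) := by ring
    _ ≤ #(B + (k + 1) • A) * #A ^ (k + 1) := by gcongr
    _ ≤ (2 * #(A + A)) ^ (k + 1) * #B := hB

-- Apply the inequality for one summand to the union `D` of the thickenings `B × H` and `C × K`,
-- since `2 • D` contains `(B + C) × (H + K)`.
lemma exists_large_subset_card_add_add_mul_card_add_mul_sq_le {L : Type*} [AddCommGroup L]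
    [DecidableEq L] (A B C : Finset G) (H K : Finset L) :
    ∃ X ⊆ A, #A ≤ 2 * #X ∧
      #(X + B + C) * #(H + K) * #A ^ 2 ≤ (2 * (#(A + B) * #H + #(A + C) * #K)) ^ 2 * #X := by
  let E (X : Finset G) : Finset (G × L) := X ×ˢ {0}
  let D := B ×ˢ H ∪ C ×ˢ K
  have hE (X : Finset G) : #(E X) = #X := by simp [E]
  have hAD : #(E A + D) ≤ #(A + B) * #H + #(A + C) * #K :=
    calc #(E A + D) = #((A + B) ×ˢ H ∪ (A + C) ×ˢ K) := by
          simp only [E, D, add_union, product_add_product_comm, singleton_zero, zero_add]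
      _ ≤ #(A + B) * #H + #(A + C) * #K := by
          simpa only [card_product] using card_union_le ((A + B) ×ˢ H) ((A + C) ×ˢ K)
  have hcover (X : Finset G) : (X + B + C) ×ˢ (H + K) ⊆ E X + 2 • D := by
    rw [add_assoc, two_nsmul, ← zero_add (H + K), ← singleton_zero,
      ← product_add_product_comm, ← product_add_product_comm]
    exact add_subset_add_left (add_subset_add subset_union_left subset_union_right)
  obtain ⟨X', hX'A, hAX, hX⟩ := exists_large_subset_card_add_nsmul_mul_pow_le (E A) D 2
  obtain ⟨X, hXA, rfl⟩ : ∃ X ⊆ A, X' = E X := by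
    simpa only [E, product_singleton, subset_map_iff] using hX'A
  rw [hE, hE] at hAX hX
  refine ⟨X, hXA, hAX, ?_⟩
  calc #(X + B + C) * #(H + K) * #A ^ 2 ≤ #(E X + 2 • D) * #A ^ 2 := by
        rw [← card_product]
        gcongr
        exact hcover X
    _ ≤ (2 * #(E A + D)) ^ 2 * #X := hX
    _ ≤ (2 * (#(A + B) * #H + #(A + C) * #K)) ^ 2 * #X := by gcongr

lemma exists_large_subset_card_add_add_mul_card_le (A B C : Finset G) :
    ∃ X ⊆ A, #A ≤ 2 * #X ∧ #(X + B + C) * #A ≤ 16 * (#(A + B) * #(A + C)) := by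
  obtain rfl | hA := A.eq_empty_or_nonempty
  · exact ⟨∅, Subset.rfl, by simp, by simp⟩
  obtain rfl | hB := B.eq_empty_or_nonempty
  · exact ⟨A, Subset.rfl, by lia, by simp⟩
  obtain rfl | hC := C.eq_empty_or_nonempty
  · exact ⟨A, Subset.rfl, by lia, by simp⟩
  set u := #(A + B)
  set v := #(A + C)
  have hu : 0 < u := (hA.add hB).card_pos
  have hv : 0 < v := (hA.add hC).card_pos
  have : NeZero u := ⟨hu.ne'⟩
  have : NeZero v := ⟨hv.ne'⟩
  -- Thickening by `v` and `u` elements respectively balances the two summands.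
  obtain ⟨X, hXA, hAX, hX⟩ := exists_large_subset_card_add_add_mul_card_add_mul_sq_le A B C
    ((univ : Finset (ZMod v)) ×ˢ ({0} : Finset (ZMod u))) ({0} ×ˢ univ)
  rw [product_add_product_comm, singleton_zero, singleton_zero, add_zero, zero_add] at hX
  simp only [card_product, card_univ, ZMod.card, card_zero, mul_one, one_mul] at hX
  refine ⟨X, hXA, hAX, Nat.le_of_mul_le_mul_right ?_
    (mul_pos (mul_pos hv hu) hA.card_pos : 0 < v * u * #A)⟩
  calc #(X + B + C) * #A * (v * u * #A) = #(X + B + C) * (v * u) * #A ^ 2 := by ring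
    _ ≤ (2 * (u * v + v * u)) ^ 2 * #X := hX
    _ ≤ (2 * (u * v + v * u)) ^ 2 * #A := by gcongr
    _ = 16 * (u * v) * (v * u * #A) := by ring

end Pluennecke

section Dilates

variable {M G : Type*} [Monoid M] [AddCommGroup G] [DistribMulAction M G] [DecidableEq G]

lemma card_smul_add_smul_inter_smul_le (X B : Finset G) (a b : M) :
    #(a • X + (a • B ∩ b • B)) ≤ #(X + B) :=
  calc #(a • X + (a • B ∩ b • B)) ≤ #(a • X + a • B) := by gcongr; exact inter_subset_left
    _ = #(a • (X + B)) := by rw [smul_add]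
    _ ≤ #(X + B) := card_smul_finset_le

lemma card_smul_add_mul_card_inter_le (X B V : Finset G) (a b : M) :
    #(a • X + V) * #(a • B ∩ b • B) ≤ #(X + B) * #(b • B + V) :=
  calc #(a • X + V) * #(a • B ∩ b • B)
      ≤ #(a • X + (a • B ∩ b • B)) * #((a • B ∩ b • B) + V) :=
        ruzsa_triangle_inequality_add_add_add _ _ _
    _ ≤ #(X + B) * #(b • B + V) :=
        Nat.mul_le_mul (card_smul_add_smul_inter_smul_le X B a b)
          (card_le_card (add_subset_add_right inter_subset_right))

lemma card_smul_sub_mul_card_inter_le (X B V : Finset G) (a b : M) :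
    #(a • X - V) * #(a • B ∩ b • B) ≤ #(X + B) * #(b • B + V) :=
  calc #(a • X - V) * #(a • B ∩ b • B)
      ≤ #(a • X + (a • B ∩ b • B)) * #(V + (a • B ∩ b • B)) :=
        ruzsa_triangle_inequality_sub_add_add _ _ _
    _ ≤ #(X + B) * #(b • B + V) := by
        rw [add_comm V]
        exact Nat.mul_le_mul (card_smul_add_smul_inter_smul_le X B a b)
          (card_le_card (add_subset_add_right inter_subset_right))

lemma card_smul_sub_smul_sub_mul_sq_le {X B : Finset G} (V : Finset G) {a b e : M} {t : ℕ}
    (ha : t ≤ #(a • B ∩ e • B)) (hb : t ≤ #(b • B ∩ e • B)) :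
    #(a • X - b • X - V) * t ^ 2 ≤ #(X + B) ^ 2 * #(e • B + e • B + V) :=
  calc #(a • X - b • X - V) * t ^ 2 = #(a • X - (b • X + V)) * t * t := by
        rw [sub_sub, sq, mul_assoc]
    _ ≤ #(a • X - (b • X + V)) * #(a • B ∩ e • B) * t := by gcongr
    _ ≤ #(X + B) * #(e • B + (b • X + V)) * t := by
        gcongr ?_ * t
        exact card_smul_sub_mul_card_inter_le X B _ a e
    _ ≤ #(X + B) * (#(b • X + (e • B + V)) * #(b • B ∩ e • B)) := by
        rw [add_left_comm, mul_assoc]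
        gcongr
    _ ≤ #(X + B) * (#(X + B) * #(e • B + (e • B + V))) := by
        gcongr #(X + B) * ?_
        exact card_smul_add_mul_card_inter_le X B _ b e
    _ = #(X + B) ^ 2 * #(e • B + e • B + V) := by rw [sq, mul_assoc, add_assoc]

lemma card_smul_sub_smul_add_smul_sub_smul_mul_pow_le {X B : Finset G} {a b c d e : M} {t : ℕ}
    (ha : t ≤ #(a • B ∩ e • B)) (hb : t ≤ #(b • B ∩ e • B))
    (hc : t ≤ #(c • B ∩ e • B)) (hd : t ≤ #(d • B ∩ e • B)) :
    #((a • X - b • X) + (c • X - d • X)) * t ^ 4 ≤ #(X + B) ^ 4 * #(4 • B) := by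
  set P := e • B + e • B
  have hPP : #(P + P) ≤ #(4 • B) := by
    have h : P + P = e • (4 • B) := by
      rw [show 4 • B = (B + B) + (B + B) by abel, smul_add, smul_add]
    rw [h]
    exact card_smul_finset_le
  calc #((a • X - b • X) + (c • X - d • X)) * t ^ 4
      = #(a • X - b • X - (d • X - c • X)) * t ^ 2 * t ^ 2 := by
        rw [← neg_sub (c • X), sub_neg_eq_add, mul_assoc, ← pow_add]
    _ ≤ #(X + B) ^ 2 * #(P + (d • X - c • X)) * t ^ 2 := by
        gcongr ?_ * t ^ 2
        exact card_smul_sub_smul_sub_mul_sq_le _ ha hb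
    _ = #(X + B) ^ 2 * (#(c • X - d • X - P) * t ^ 2) := by
        rw [← card_neg (c • X - d • X - P), neg_sub, sub_eq_add_neg P, neg_sub, mul_assoc]
    _ ≤ #(X + B) ^ 2 * (#(X + B) ^ 2 * #(P + P)) := by
        gcongr #(X + B) ^ 2 * ?_
        exact card_smul_sub_smul_sub_mul_sq_le _ hc hd
    _ ≤ #(X + B) ^ 4 * #(4 • B) := by
        rw [← mul_assoc, ← pow_add]
        gcongr

end Dilates

lemma add_pow_succ_le {R : Type*} [CommSemiring R] [PartialOrder R] [IsOrderedRing R] {x y : R}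
    (hx : 0 ≤ x) (hy : 0 ≤ y) (k : ℕ) :
    (x + y) ^ (k + 1) ≤ x ^ (k + 1) + (k + 1) * (x + y) ^ k * y := by
  induction k with
  | zero => simp
  | succ k ih =>
    have hxy : x ≤ x + y := le_add_of_nonneg_right hy
    calc (x + y) ^ (k + 1 + 1) = (x + y) ^ (k + 1) * x + (x + y) ^ (k + 1) * y := by ring
      _ ≤ (x ^ (k + 1) + (k + 1) * (x + y) ^ k * y) * x + (x + y) ^ (k + 1) * y := by gcongr
      _ = x ^ (k + 1 + 1) + (k + 1) * (x + y) ^ k * y * x + (x + y) ^ (k + 1) * y := by ring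
      _ ≤ x ^ (k + 1 + 1) + (k + 1) * (x + y) ^ k * y * (x + y) + (x + y) ^ (k + 1) * y := by
        have : 0 ≤ (k + 1) * (x + y) ^ k * y := by
          have := add_nonneg hx hy
          have := Nat.cast_nonneg (α := R) (k + 1)
          push_cast at this
          positivity
        gcongr
      _ = x ^ (k + 1 + 1) + ((k + 1 : ℕ) + 1) * (x + y) ^ (k + 1) * y := by push_cast; ring

lemma sum_pow_le_of_card_filter_pow_mul_pow_le {ι : Type*} (s : Finset ι) (w : ι → ℕ) {k Y : ℕ}
    (h : ∀ t, #{a ∈ s | t ≤ w a} ^ k * t ^ (k + 1) ≤ Y) :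
    (∑ a ∈ s, w a) ^ (k + 1) ≤ (k + 1) ^ (k + 1) * (Y * #s) := by
  classical
  induction s using Finset.induction_on_min_value w with
  | empty => simp
  | insert a s ha hmin ih =>
    have hlast : (#s + 1) ^ k * w a ^ (k + 1) ≤ Y := by
      have := h (w a)
      rwa [filter_true_of_mem (by simpa using hmin), card_insert_of_notMem ha] at this
    have hs : (∑ x ∈ s, w x) ^ (k + 1) ≤ (k + 1) ^ (k + 1) * (Y * #s) := by
      refine ih fun t ↦ le_trans ?_ (h t)
      gcongr
      exact subset_insert a s
    rw [sum_insert ha, card_insert_of_notMem ha, add_comm (w a)]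
    set W := ∑ x ∈ s, w x
    obtain hsmall | hlarge := le_or_gt (W + w a) ((k + 1) * ((#s + 1) * w a))
    · calc (W + w a) ^ (k + 1) ≤ ((k + 1) * ((#s + 1) * w a)) ^ (k + 1) := by gcongr
        _ = (k + 1) ^ (k + 1) * ((#s + 1) ^ k * w a ^ (k + 1) * (#s + 1)) := by
            rw [mul_pow, mul_pow, pow_succ (#s + 1)]
            ring
        _ ≤ (k + 1) ^ (k + 1) * (Y * (#s + 1)) := by gcongr
    · have hs₀ : 0 < #s := by
        rw [card_pos, nonempty_iff_ne_empty]
        rintro rfl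
        simp only [W, sum_empty, card_empty, zero_add, one_mul] at hlarge
        exact hlarge.not_ge (Nat.le_mul_of_pos_left _ k.succ_pos)
      have hstep : #s * (W + w a) ^ (k + 1) ≤ (#s + 1) * W ^ (k + 1) := by
        have bernoulli := add_pow_succ_le W.zero_le (w a).zero_le k
        have := Nat.mul_le_mul_left ((W + w a) ^ k) hlarge.le
        rw [Nat.cast_id] at bernoulli
        nlinarith [pow_succ (W + w a) k]
      refine Nat.le_of_mul_le_mul_left ?_ hs₀
      calc #s * (W + w a) ^ (k + 1) ≤ (#s + 1) * W ^ (k + 1) := hstep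
        _ ≤ (#s + 1) * ((k + 1) ^ (k + 1) * (Y * #s)) := by gcongr
        _ = #s * ((k + 1) ^ (k + 1) * (Y * (#s + 1))) := by ring

lemma card_sq_le_card_image_mul_card_filter_eq {α β : Type*} [DecidableEq β] (s : Finset α)
    (f : α → β) : #s ^ 2 ≤ #(s.image f) * #{q ∈ s ×ˢ s | f q.1 = f q.2} := by
  have hcount : ∑ b ∈ s.image f, #{x ∈ s | f x = b} ^ 2 = #{q ∈ s ×ˢ s | f q.1 = f q.2} := by
    rw [card_filter, sum_product]
    refine sum_image' _ fun x _ ↦ ?_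
    have hfiber : ∀ y ∈ {y ∈ s | f y = f x},
        ∑ z ∈ s, (if f y = f z then 1 else 0) = #{z ∈ s | f z = f x} := by
      intro y hy
      simp only [(mem_filter.1 hy).2, eq_comm (a := f x), card_filter]
    rw [sum_congr rfl hfiber, sum_const, smul_eq_mul, sq]
  calc #s ^ 2 = (∑ b ∈ s.image f, #{x ∈ s | f x = b}) ^ 2 := by rw [← card_eq_sum_card_image]
    _ ≤ #(s.image f) * ∑ b ∈ s.image f, #{x ∈ s | f x = b} ^ 2 := sq_sum_le_card_mul_sum_sq
    _ = #(s.image f) * #{q ∈ s ×ˢ s | f q.1 = f q.2} := by rw [hcount]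

section Energy

open scoped Combinatorics.Additive

variable {M : Type*} [Mul M] [Zero M] [IsLeftCancelMulZero M] [DecidableEq M]

lemma card_filter_mul_eq_mul {a b : M} (ha : a ≠ 0) (hb : b ≠ 0) (t : Finset M) :
    #{y ∈ t ×ˢ t | a * y.1 = b * y.2} = #(a • t ∩ b • t) := by
  have himage : a • t ∩ b • t = image (fun y ↦ a * y.1) {y ∈ t ×ˢ t | a * y.1 = b * y.2} := by
    ext z
    simp only [mem_inter, mem_smul_finset, smul_eq_mul, mem_image, mem_filter, mem_product,
      Prod.exists]
    grind
  rw [himage, card_image_of_injOn]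
  rintro ⟨y, z⟩ h ⟨y', z'⟩ h' hy
  simp only [coe_filter, Set.mem_ofPred_eq] at h h'
  obtain rfl : y = y' := mul_left_cancel₀ ha hy
  rw [mul_left_cancel₀ hb (h.2.symm.trans h'.2)]

lemma mulEnergy_eq_sum_card_smul_inter_smul {s : Finset M} (hs : 0 ∉ s) (t : Finset M) :
    Eₘ[s, t] = ∑ b ∈ s, ∑ a ∈ s, #(a • t ∩ b • t) := by
  have hs' {a : M} (ha : a ∈ s) : a ≠ 0 := ne_of_mem_of_not_mem ha hs
  rw [mulEnergy, card_filter, sum_product, sum_product, sum_comm]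
  refine sum_congr rfl fun b hb ↦ sum_congr rfl fun a ha ↦ ?_
  rw [← card_filter_mul_eq_mul (hs' ha) (hs' hb), card_filter]

lemma exists_card_mul_card_sq_le_card_mul_mul_sum {s : Finset M} (hs : s.Nonempty) (hs₀ : 0 ∉ s)
    (t : Finset M) : ∃ b ∈ s, #s * #t ^ 2 ≤ #(s * t) * ∑ a ∈ s, #(a • t ∩ b • t) := by
  refine exists_le_of_sum_le hs ?_
  calc ∑ _b ∈ s, #s * #t ^ 2 = #s ^ 2 * #t ^ 2 := by rw [sum_const, smul_eq_mul]; ring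
    _ ≤ #(s * t) * Eₘ[s, t] := le_card_mul_mul_mulEnergy s t
    _ = ∑ b ∈ s, #(s * t) * ∑ a ∈ s, #(a • t ∩ b • t) := by
      rw [mulEnergy_eq_sum_card_smul_inter_smul hs₀, mul_sum]

end Energy

section LinearCollisions

variable {R : Type*} [CommRing R] [DecidableEq R]

lemma add_smul_eq_image_product (X Y : Finset R) (r : R) :
    X + r • Y = (X ×ˢ Y).image fun q ↦ q.1 + r * q.2 := by
  ext z
  simp only [mem_add, mem_smul_finset, mem_image, mem_product, Prod.exists, smul_eq_mul]
  grind

lemma sum_card_filter_add_mul_eq_le [NoZeroDivisors R] (X Y S : Finset R) :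
    ∑ r ∈ S, #{q ∈ (X ×ˢ Y) ×ˢ (X ×ˢ Y) | q.1.1 + r * q.1.2 = q.2.1 + r * q.2.2} ≤
      (#X * #Y) ^ 2 + #X * #Y * #S := by
  have hcollision (q : (R × R) × R × R) :
      #{r ∈ S | q.1.1 + r * q.1.2 = q.2.1 + r * q.2.2} ≤ 1 + if q.1 = q.2 then #S else 0 := by
    obtain ⟨⟨x, y⟩, x', y'⟩ := q
    split_ifs with hq
    · exact (card_filter_le _ _).trans (Nat.le_add_left _ _)
    refine card_le_one.2 fun r hr s hs ↦ ?_
    have hr : x + r * y = x' + r * y' := (mem_filter.1 hr).2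
    have hs : x + s * y = x' + s * y' := (mem_filter.1 hs).2
    have hrs : (r - s) * (y - y') = 0 := by linear_combination hr - hs
    obtain h | h := mul_eq_zero.1 hrs
    · exact sub_eq_zero.1 h
    · obtain rfl : y = y' := sub_eq_zero.1 h
      exact absurd (by rw [add_right_cancel hr]) hq
  have hdiag : #{q ∈ (X ×ˢ Y) ×ˢ (X ×ˢ Y) | q.1 = q.2} = #X * #Y := by
    rw [← card_product, ← diag_card (X ×ˢ Y), diag_eq_filter]
  calc ∑ r ∈ S, #{q ∈ (X ×ˢ Y) ×ˢ (X ×ˢ Y) | q.1.1 + r * q.1.2 = q.2.1 + r * q.2.2}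
      = ∑ q ∈ (X ×ˢ Y) ×ˢ (X ×ˢ Y), #{r ∈ S | q.1.1 + r * q.1.2 = q.2.1 + r * q.2.2} :=
        sum_card_bipartiteAbove_eq_sum_card_bipartiteBelow _
    _ ≤ ∑ q ∈ (X ×ˢ Y) ×ˢ (X ×ˢ Y), (1 + if q.1 = q.2 then #S else 0) :=
        sum_le_sum fun q _ ↦ hcollision q
    _ = (#X * #Y) ^ 2 + #X * #Y * #S := by
        rw [sum_add_distrib, ← card_eq_sum_ones, ← sum_filter, sum_const, hdiag, card_product,
          card_product, sq, smul_eq_mul]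

lemma exists_card_mul_card_le_two_mul_card_add_smul [NoZeroDivisors R] {X Y S : Finset R}
    (hS : S.Nonempty) (hXY : #X * #Y ≤ #S) : ∃ r ∈ S, #X * #Y ≤ 2 * #(X + r • Y) := by
  let Q (r : R) := {q ∈ (X ×ˢ Y) ×ˢ (X ×ˢ Y) | q.1.1 + r * q.1.2 = q.2.1 + r * q.2.2}
  have hsum : ∑ r ∈ S, #(Q r) ≤ ∑ _r ∈ S, 2 * (#X * #Y) :=
    calc ∑ r ∈ S, #(Q r) ≤ (#X * #Y) ^ 2 + #X * #Y * #S := sum_card_filter_add_mul_eq_le X Y S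
      _ ≤ ∑ _r ∈ S, 2 * (#X * #Y) := by
        rw [sum_const, smul_eq_mul]
        linarith [Nat.mul_le_mul_left (#X * #Y) hXY]
  obtain ⟨r, hr, hQ⟩ := exists_le_of_sum_le hS hsum
  refine ⟨r, hr, ?_⟩
  obtain h₀ | h₀ := Nat.eq_zero_or_pos (#X * #Y)
  · lia
  refine Nat.le_of_mul_le_mul_right ?_ h₀
  calc #X * #Y * (#X * #Y) = #(X ×ˢ Y) ^ 2 := by rw [card_product, sq]
    _ ≤ #(X + r • Y) * #(Q r) := by
      rw [add_smul_eq_image_product]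
      exact card_sq_le_card_image_mul_card_filter_eq _ _
    _ ≤ #(X + r • Y) * (2 * (#X * #Y)) := by gcongr
    _ = 2 * #(X + r • Y) * (#X * #Y) := by ring

end LinearCollisions

section DifferenceRatios

variable {F : Type*} [Field F] [DecidableEq F]

/-- The set `(X - X) / (X - X)` of ratios of differences of elements of `X`, with the junk ratios
of denominator `0` left out. -/
def differenceRatios (X : Finset F) : Finset F := (X - X) / (X - X).erase 0

lemma mem_differenceRatios {X : Finset F} {r : F} :
    r ∈ differenceRatios X ↔
      ∃ a ∈ X, ∃ b ∈ X, ∃ c ∈ X, ∃ d ∈ X, c ≠ d ∧ (a - b) / (c - d) = r := by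
  simp only [differenceRatios, mem_div, mem_erase, mem_sub]
  grind

lemma card_add_smul_of_notMem_differenceRatios {X Y Z : Finset F} (hY : Y ⊆ X) (hZ : Z ⊆ X)
    {r : F} (hr : r ∉ differenceRatios X) : #(Y + r • Z) = #Y * #Z := by
  rw [add_smul_eq_image_product, ← card_product]
  refine card_image_of_injOn fun ⟨y, z⟩ h ⟨y', z'⟩ h' heq ↦ ?_
  obtain ⟨hy, hz⟩ := mem_product.1 h
  obtain ⟨hy', hz'⟩ := mem_product.1 h'
  simp only at heq
  obtain rfl : z = z' := by
    by_contra hne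
    refine hr (mem_differenceRatios.2 ⟨y', hY hy', y, hY hy, z, hZ hz, z', hZ hz', hne, ?_⟩)
    rw [div_eq_iff (sub_ne_zero.2 hne)]
    linear_combination -heq
  rw [add_right_cancel heq]

lemma exists_add_one_notMem_differenceRatios_or_forall_natCast_mem {X : Finset F}
    (hX : X.Nontrivial) :
    (∃ r ∈ differenceRatios X, r + 1 ∉ differenceRatios X) ∨
      ∀ n : ℕ, (n : F) ∈ differenceRatios X := by
  refine or_iff_not_imp_left.2 fun h n ↦ ?_
  push Not at h
  induction n with
  | zero =>
    obtain ⟨c, hc, d, hd, hcd⟩ := hX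
    exact mem_differenceRatios.2 ⟨c, hc, c, hc, c, hc, d, hd, hcd, by simp⟩
  | succ n ih => exact_mod_cast h _ ih

lemma card_pow_three_le_of_add_one_notMem_differenceRatios {X : Finset F} {r : F}
    (hr : r + 1 ∉ differenceRatios X) : #X ^ 3 ≤ 32 * (#(X + X) * #(X + r • X)) := by
  obtain ⟨Y, hYX, hXY, hY⟩ := exists_large_subset_card_add_add_mul_card_le X X (r • X)
  have hsub : Y + (r + 1) • X ⊆ Y + X + r • X := by
    rw [add_assoc, add_comm r]
    refine add_subset_add_left fun z hz ↦ ?_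
    obtain ⟨x, hx, rfl⟩ := mem_smul_finset.1 hz
    rw [add_smul, one_smul]
    exact add_mem_add hx (smul_mem_smul_finset hx)
  calc #X ^ 3 = #X * #X * #X := by ring
    _ ≤ 2 * #Y * #X * #X := by gcongr
    _ = 2 * (#(Y + (r + 1) • X) * #X) := by
      rw [card_add_smul_of_notMem_differenceRatios hYX Subset.rfl hr, mul_assoc, mul_assoc,
        mul_assoc]
    _ ≤ 2 * (#(Y + X + r • X) * #X) := by gcongr
    _ ≤ 2 * (16 * (#(X + X) * #(X + r • X))) := by gcongr
    _ = 32 * (#(X + X) * #(X + r • X)) := by ring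

lemma exists_mem_differenceRatios_card_pow_three_le {X : Finset F} (hX : X.Nontrivial)
    (hchar : Set.InjOn ((↑) : ℕ → F) (Set.Iio (#X ^ 2))) :
    ∃ r ∈ differenceRatios X, #X ^ 3 ≤ 32 * (#(X + X) * #(X + r • X)) := by
  obtain ⟨r, hr, hr₁⟩ | hnat := exists_add_one_notMem_differenceRatios_or_forall_natCast_mem hX
  · exact ⟨r, hr, card_pow_three_le_of_add_one_notMem_differenceRatios hr₁⟩
  let S : Finset F := (range (#X ^ 2)).image (↑)
  have hS : #S = #X ^ 2 := by
    rw [card_image_of_injOn (by rwa [coe_range]), card_range]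
  have hSne : S.Nonempty := card_pos.1 (hS ▸ pow_pos hX.nonempty.card_pos 2)
  obtain ⟨r, hr, hXr⟩ :=
    exists_card_mul_card_le_two_mul_card_add_smul (X := X) (Y := X) hSne (by rw [hS, sq])
  obtain ⟨n, -, rfl⟩ := mem_image.1 hr
  refine ⟨n, hnat n, ?_⟩
  calc #X ^ 3 = #X * (#X * #X) := by ring
    _ ≤ #(X + X) * (2 * #(X + (n : F) • X)) :=
      Nat.mul_le_mul (card_le_card_add_right hX.nonempty) hXr
    _ ≤ 32 * (#(X + X) * #(X + (n : F) • X)) := by lia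

lemma card_add_div_smul_le (X : Finset F) {a b c d : F} (hcd : c ≠ d) :
    #(X + ((a - b) / (c - d)) • X) ≤ #((a • X - b • X) + (c • X - d • X)) := by
  have hsub (u v : F) : (u - v) • X ⊆ u • X - v • X := by
    intro z hz
    obtain ⟨x, hx, rfl⟩ := mem_smul_finset.1 hz
    rw [sub_smul]
    exact sub_mem_sub (smul_mem_smul_finset hx) (smul_mem_smul_finset hx)
  have hne : c - d ≠ 0 := sub_ne_zero.2 hcd
  calc #(X + ((a - b) / (c - d)) • X) = #((c - d)⁻¹ • ((a - b) • X + (c - d) • X)) := by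
        rw [smul_add, smul_smul, smul_smul, inv_mul_cancel₀ hne, one_smul, add_comm,
          div_eq_inv_mul]
    _ ≤ #((a - b) • X + (c - d) • X) := card_smul_finset_le
    _ ≤ #((a • X - b • X) + (c • X - d • X)) := by gcongr <;> exact hsub _ _

lemma exists_card_pow_three_le_mul_card_smul_sub_smul_add {X : Finset F} (hX : X.Nonempty)
    (hchar : Set.InjOn ((↑) : ℕ → F) (Set.Iio (#X ^ 2))) :
    ∃ a ∈ X, ∃ b ∈ X, ∃ c ∈ X, ∃ d ∈ X,
      #X ^ 3 ≤ 32 * (#(X + X) * #((a • X - b • X) + (c • X - d • X))) := by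
  obtain ⟨x, rfl⟩ | hX := hX.exists_eq_singleton_or_nontrivial
  · exact ⟨x, by simp, x, by simp, x, by simp, x, by simp, by simp⟩
  obtain ⟨r, hr, hXr⟩ := exists_mem_differenceRatios_card_pow_three_le hX hchar
  obtain ⟨a, ha, b, hb, c, hc, d, hd, hcd, rfl⟩ := mem_differenceRatios.1 hr
  refine ⟨a, ha, b, hb, c, hc, d, hd, hXr.trans ?_⟩
  exact Nat.mul_le_mul_left _ (Nat.mul_le_mul_left _ (card_add_div_smul_le X hcd))

end DifferenceRatios

section SumProduct

variable {F : Type*} [Field F] [DecidableEq F]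

/-- The elements `a` of `B` whose dilate `a • B` is popular relative to `e • B`: the two share at
least `t` elements. These superlevel sets control the multiplicative energy. -/
def popularDilates (B : Finset F) (e : F) (t : ℕ) : Finset F := {a ∈ B | t ≤ #(a • B ∩ e • B)}

lemma card_popularDilates_pow_three_mul_pow_four_le {B : Finset F}
    (hchar : Set.InjOn ((↑) : ℕ → F) (Set.Iio (#B ^ 2))) (e : F) (t : ℕ) :
    #(popularDilates B e t) ^ 3 * t ^ 4 ≤ 32 * (#(B + B) ^ 5 * #(4 • B)) := by
  set X := popularDilates B e t
  have hXB : X ⊆ B := filter_subset _ _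
  have hpopular {a : F} (ha : a ∈ X) : t ≤ #(a • B ∩ e • B) := (mem_filter.1 ha).2
  obtain hX | hX := X.eq_empty_or_nonempty
  · simp [hX]
  have hcharX : Set.InjOn ((↑) : ℕ → F) (Set.Iio (#X ^ 2)) :=
    hchar.mono (Set.Iio_subset_Iio (by gcongr))
  obtain ⟨a, ha, b, hb, c, hc, d, hd, hgrow⟩ :=
    exists_card_pow_three_le_mul_card_smul_sub_smul_add hX hcharX
  calc #X ^ 3 * t ^ 4
      ≤ 32 * (#(X + X) * #((a • X - b • X) + (c • X - d • X))) * t ^ 4 := by gcongr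
    _ = 32 * (#(X + X) * (#((a • X - b • X) + (c • X - d • X)) * t ^ 4)) := by ring
    _ ≤ 32 * (#(X + X) * (#(X + B) ^ 4 * #(4 • B))) := by
      gcongr 32 * (#(X + X) * ?_)
      exact card_smul_sub_smul_add_smul_sub_smul_mul_pow_le (hpopular ha) (hpopular hb)
        (hpopular hc) (hpopular hd)
    _ ≤ 32 * (#(B + B) * (#(B + B) ^ 4 * #(4 • B))) := by gcongr
    _ = 32 * (#(B + B) ^ 5 * #(4 • B)) := by ring

lemma card_pow_eleven_le_s10 {B : Finset F} (hB₀ : 0 ∉ B)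
    (hchar : Set.InjOn ((↑) : ℕ → F) (Set.Iio (#B ^ 2))) :
    #B ^ 11 ≤ 2 ^ 13 * (#(B + B) ^ 5 * #(4 • B) * #(B * B) ^ 4) := by
  obtain rfl | hB := B.eq_empty_or_nonempty
  · simp
  obtain ⟨e, -, he⟩ := exists_card_mul_card_sq_le_card_mul_mul_sum hB hB₀ B
  set E := ∑ a ∈ B, #(a • B ∩ e • B)
  have hE : E ^ 4 ≤ 4 ^ 4 * (32 * (#(B + B) ^ 5 * #(4 • B)) * #B) :=
    sum_pow_le_of_card_filter_pow_mul_pow_le B _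
      (card_popularDilates_pow_three_mul_pow_four_le hchar e)
  refine Nat.le_of_mul_le_mul_right ?_ hB.card_pos
  calc #B ^ 11 * #B = (#B * #B ^ 2) ^ 4 := by ring
    _ ≤ (#(B * B) * E) ^ 4 := by gcongr
    _ = #(B * B) ^ 4 * E ^ 4 := mul_pow _ _ _
    _ ≤ #(B * B) ^ 4 * (4 ^ 4 * (32 * (#(B + B) ^ 5 * #(4 • B)) * #B)) := by gcongr
    _ = 2 ^ 13 * (#(B + B) ^ 5 * #(4 • B) * #(B * B) ^ 4) * #B := by ring

lemma card_pow_thirteen_le_of_zero_notMem_s10 {A : Finset F} (hA₀ : 0 ∉ A)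
    (hchar : Set.InjOn ((↑) : ℕ → F) (Set.Iio (#A ^ 2))) :
    #A ^ 13 ≤ 2 ^ 29 * (#(A + A) ^ 8 * #(A * A) ^ 4) := by
  obtain ⟨B, hBA, hAB, hB⟩ := exists_large_subset_card_nsmul_mul_pow_le A 2
  have hcharB : Set.InjOn ((↑) : ℕ → F) (Set.Iio (#B ^ 2)) :=
    hchar.mono (Set.Iio_subset_Iio (by gcongr))
  calc #A ^ 13 ≤ (2 * #B) ^ 13 := by gcongr
    _ = 2 ^ 13 * (#B ^ 11 * #B ^ 2) := by ring
    _ ≤ 2 ^ 13 * (2 ^ 13 * (#(B + B) ^ 5 * #(4 • B) * #(B * B) ^ 4) * #B ^ 2) := by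
      gcongr
      exact card_pow_eleven_le_s10 (notMem_mono hBA hA₀) hcharB
    _ = 2 ^ 26 * (#(B + B) ^ 5 * (#(4 • B) * #B ^ 2) * #(B * B) ^ 4) := by ring
    _ ≤ 2 ^ 26 * (#(A + A) ^ 5 * (2 * #(A + A)) ^ 3 * #(A * A) ^ 4) := by gcongr
    _ = 2 ^ 29 * (#(A + A) ^ 8 * #(A * A) ^ 4) := by ring

theorem key_inequality_small_general (p : ℕ) [CharP F p] {A : Finset F}
    (hA : p = 0 ∨ #A ^ 2 ≤ p) : #A ^ 13 ≤ 2 ^ 42 * (#(A + A) ^ 8 * #(A * A) ^ 4) := by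
  have hchar : Set.InjOn ((↑) : ℕ → F) (Set.Iio (#A ^ 2)) := by
    obtain rfl | hp := hA
    · have := CharP.charP_to_charZero F
      exact Nat.cast_injective.injOn
    · exact (CharP.natCast_injOn_Iio F p).mono (Set.Iio_subset_Iio hp)
  obtain hsmall | hlarge := le_or_gt #A 1
  · obtain rfl | hAne := A.eq_empty_or_nonempty
    · simp
    · calc #A ^ 13 ≤ 1 ^ 13 := by gcongr
        _ ≤ 2 ^ 42 * (#(A + A) ^ 8 * #(A * A) ^ 4) :=
          Nat.one_le_iff_ne_zero.2 (by simp [hAne.ne_empty])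
  have hcard : #A ≤ 2 * #(A.erase 0) := by
    have := pred_card_le_card_erase (s := A) (a := 0)
    lia
  have hsub : A.erase 0 ⊆ A := erase_subset 0 A
  calc #A ^ 13 ≤ (2 * #(A.erase 0)) ^ 13 := by gcongr
    _ = 2 ^ 13 * #(A.erase 0) ^ 13 := mul_pow _ _ _
    _ ≤ 2 ^ 13 * (2 ^ 29 * (#(A.erase 0 + A.erase 0) ^ 8 * #(A.erase 0 * A.erase 0) ^ 4)) := by
      gcongr
      exact card_pow_thirteen_le_of_zero_notMem_s10 (notMem_erase 0 A)
        (hchar.mono (Set.Iio_subset_Iio (by gcongr)))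
    _ ≤ 2 ^ 13 * (2 ^ 29 * (#(A + A) ^ 8 * #(A * A) ^ 4)) := by gcongr
    _ = 2 ^ 42 * (#(A + A) ^ 8 * #(A * A) ^ 4) := by ring

end SumProduct

theorem key_inequality_small :
    ∃ c : ℝ, 0 < c ∧ ∀ (p : ℕ), p.Prime → ∀ A : Finset (ZMod p),
      2 ≤ A.card → (A.card : ℝ) ≤ Real.sqrt p →
      c * (A.card : ℝ) ^ 13 ≤ ((A + A).card : ℝ) ^ 8 * ((A * A).card : ℝ) ^ 4 := by
  refine ⟨(2 ^ 42)⁻¹, by positivity, fun p hp A _ hAp ↦ ?_⟩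
  have := Fact.mk hp
  have hA : #A ^ 2 ≤ p := by exact_mod_cast (Real.le_sqrt (by positivity) (by positivity)).1 hAp
  rw [inv_mul_le_iff₀ (by positivity)]
  exact_mod_cast key_inequality_small_general p (.inr hA)
end
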